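/- Let n ≥ 2, let q be the Lorentzian quadratic form q(x) = 2x₁x_{n+1} + x₂² + ⋯ + xₙ² on ℝ^{n+1}, let ρ be a continuous representation of O(1,n) on a finite-dimensional real normed vector space V, and let 𝒢 ⊆ O(1,n). Let p, p', p'' be three pairwise non-proportional limit directions of 𝒢 and let E = span{p, p', p''} (a 3-dimensional subspace on which q is nondegenerate). Then every vector v ∈ V that is stable under 𝒢 satisfies ρ(g)v = v for every g ∈ SO°(E). -/

import Mathlib

open Matrix Filter Topology Bornology

noncomputable section

/-- The Lorentzian quadratic form `q(x) = 2 x₁ x_{n+1} + x₂² + ⋯ + xₙ²` on `ℝ^{n+1}`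
(coordinates indexed by `Fin (n+1)`, so `x₁` is `x 0` and `x_{n+1}` is `x (Fin.last n)`). -/
def lorQ (n : ℕ) (x : Fin (n + 1) → ℝ) : ℝ :=
  2 * x 0 * x (Fin.last n) +
    ∑ i : Fin (n + 1), if i ≠ 0 ∧ i ≠ Fin.last n then x i ^ 2 else 0

/-- The polar bilinear form `B` of `lorQ`. -/
def lorB (n : ℕ) (x y : Fin (n + 1) → ℝ) : ℝ :=
  x 0 * y (Fin.last n) + x (Fin.last n) * y 0 +
    ∑ i : Fin (n + 1), if i ≠ 0 ∧ i ≠ Fin.last n then x i * y i else 0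

/-- The Lorentz group `O(1,n)`: linear automorphisms of `ℝ^{n+1}` preserving `lorQ`. -/
def LorentzGrp (n : ℕ) : Subgroup (GL (Fin (n + 1)) ℝ) where
  carrier := {g | ∀ x, lorQ n ((g : Matrix (Fin (n + 1)) (Fin (n + 1)) ℝ).mulVec x) = lorQ n x}
  one_mem' := by intro x; simp
  mul_mem' := by
    intro a b ha hb x
    have h : ((a * b : GL (Fin (n + 1)) ℝ) : Matrix (Fin (n + 1)) (Fin (n + 1)) ℝ).mulVec x
        = (a : Matrix (Fin (n + 1)) (Fin (n + 1)) ℝ).mulVec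
            ((b : Matrix (Fin (n + 1)) (Fin (n + 1)) ℝ).mulVec x) := by
      rw [Matrix.mulVec_mulVec]; rfl
    rw [h, ha, hb]
  inv_mem' := by
    intro g hg x
    have h : (g : Matrix (Fin (n + 1)) (Fin (n + 1)) ℝ).mulVec
        ((↑g⁻¹ : Matrix (Fin (n + 1)) (Fin (n + 1)) ℝ).mulVec x) = x := by
      rw [Matrix.mulVec_mulVec]
      have : (g : Matrix (Fin (n + 1)) (Fin (n + 1)) ℝ) * (↑g⁻¹ : Matrix (Fin (n + 1)) (Fin (n + 1)) ℝ)
          = (1 : Matrix (Fin (n + 1)) (Fin (n + 1)) ℝ) := by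
        rw [← Units.val_mul, mul_inv_cancel, Units.val_one]
      rw [this, Matrix.one_mulVec]
    calc lorQ n ((↑g⁻¹ : Matrix (Fin (n + 1)) (Fin (n + 1)) ℝ).mulVec x)
        = lorQ n ((g : Matrix (Fin (n + 1)) (Fin (n + 1)) ℝ).mulVec
            ((↑g⁻¹ : Matrix (Fin (n + 1)) (Fin (n + 1)) ℝ).mulVec x)) := (hg _).symm
      _ = lorQ n x := by rw [h]

/-- The action of an element of `O(1,n)` on a vector of `ℝ^{n+1}`. -/
def lorAct {n : ℕ} (g : LorentzGrp n) (x : Fin (n + 1) → ℝ) : Fin (n + 1) → ℝ :=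
  ((g : GL (Fin (n + 1)) ℝ) : Matrix (Fin (n + 1)) (Fin (n + 1)) ℝ).mulVec x

/-- The base point `o = e₁ − e_{n+1}`, a timelike vector. -/
def basePt (n : ℕ) : Fin (n + 1) → ℝ := fun i =>
  if i = 0 then 1 else if i = Fin.last n then -1 else 0

/-- `u` is a limit direction of a subset `G` of `O(1,n)`: `u` is nonzero lightlike, and some
sequence `λ_k • g_k⁻¹(o)`, with `g_k ∈ G`, converges to `u`. -/
def IsLimitDirection (n : ℕ) (G : Set (LorentzGrp n)) (u : Fin (n + 1) → ℝ) : Prop :=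
  u ≠ 0 ∧ lorQ n u = 0 ∧
    ∃ (g : ℕ → LorentzGrp n) (lam : ℕ → ℝ), (∀ k, g k ∈ G) ∧
      Tendsto (fun k => lam k • lorAct (g k)⁻¹ (basePt n)) atTop (𝓝 u)

/-- A vector `v` is stable under `G ⊆ O(1,n)` if its `ρ`-orbit under `G` is bounded. -/
def IsStableVec {n : ℕ} {V : Type*} [NormedAddCommGroup V] [NormedSpace ℝ V]
    (ρ : LorentzGrp n →* (V →L[ℝ] V)) (G : Set (LorentzGrp n)) (v : V) : Prop :=
  IsBounded {w : V | ∃ g ∈ G, w = ρ g v}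

/-- `SO°(E)`: the identity component of the subgroup of `O(1,n)` of elements leaving `E`
invariant and fixing pointwise every vector orthogonal to `E`. -/
def SOIdComp (n : ℕ) (E : Submodule ℝ (Fin (n + 1) → ℝ)) : Set (LorentzGrp n) :=
  connectedComponentIn
    {g : LorentzGrp n |
      E.map ((g : GL (Fin (n + 1)) ℝ) : Matrix (Fin (n + 1)) (Fin (n + 1)) ℝ).mulVecLin = E ∧
      ∀ x : Fin (n + 1) → ℝ, (∀ e ∈ E, lorB n x e = 0) → lorAct g x = x} 1

/-- A continuous one-parameter family is differentiable at zero. -/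
lemma oneParam_hasDerivAt {A : Type*} [NormedRing A] [NormedAlgebra ℝ A] [CompleteSpace A]
    (f : ℝ → A) (hf : Continuous f) (h0 : f 0 = 1) (hm : ∀ s t, f (s + t) = f s * f t) :
    ∃ N : A, ∀ s, HasDerivAt f (N * f s) s := by
  have hF : ∀ t, HasDerivAt (fun t => ∫ x in (0:ℝ)..t, f x) (f t) t := fun t =>
    intervalIntegral.integral_hasDerivAt_right (hf.intervalIntegrable _ _)
      (hf.stronglyMeasurableAtFilter _ _) hf.continuousAt
  set F : ℝ → A := fun t => ∫ x in (0:ℝ)..t, f x with hFdef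
  have hF0 : F 0 = 0 := by simp [hFdef]
  have hadd : ∀ s t, F (s + t) = F s + f s * F t := by
    intro s t
    have e1 : f s * F t = ∫ x in (0:ℝ)..t, f s * f x := by
      simp only [hFdef]
      exact ((ContinuousLinearMap.mul ℝ A (f s)).intervalIntegral_comp_comm
        (hf.intervalIntegrable 0 t)).symm
    have e2 : ∫ x in (0:ℝ)..t, f s * f x = ∫ x in s..(s+t), f x := by
      simp_rw [← hm]
      rw [intervalIntegral.integral_comp_add_left]
      simp
    rw [e1, e2]
    exact (intervalIntegral.integral_add_adjacent_intervals
      (hf.intervalIntegrable _ _) (hf.intervalIntegrable _ _)).symm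
  -- find t with F t a unit
  obtain ⟨δ, hu⟩ : ∃ δ : ℝ, IsUnit (F δ) := by
    have hd := (hF 0)
    rw [h0, hasDerivAt_iff_tendsto_slope_zero] at hd
    have hop : IsOpen {a : A | IsUnit a} := Units.isOpen
    have hev := hd.eventually (hop.mem_nhds (show (1:A) ∈ {a : A | IsUnit a} from isUnit_one))
    have hne : ∀ᶠ t : ℝ in 𝓝[≠] 0, t ≠ 0 := eventually_mem_nhdsWithin
    obtain ⟨t, ht, htne⟩ := (hev.and hne).exists
    refine ⟨t, ?_⟩
    simp only [zero_add, hF0, sub_zero] at ht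
    have := (Units.mk0 t htne • ht.unit).isUnit
    convert this using 1
    simp [Units.smul_def, smul_smul, htne]
  obtain ⟨M, hM⟩ := hu
  have hfe : ∀ s, f s = (F (s + δ) - F s) * (↑M⁻¹ : A) := by
    intro s; rw [hadd, ← hM]; simp [mul_assoc]
  have hd : ∀ s, HasDerivAt f ((f (s + δ) - f s) * (↑M⁻¹ : A)) s := by
    intro s
    have h1 : HasDerivAt (fun s => (F (s + δ) - F s) * (↑M⁻¹ : A))
        ((f (s + δ) - f s) * (↑M⁻¹ : A)) s :=
      (((hF (s + δ)).comp_add_const s δ).sub (hF s)).mul_const _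
    exact h1.congr_of_eventuallyEq (Eventually.of_forall hfe)
  refine ⟨(f δ - 1) * (↑M⁻¹ : A), fun s => ?_⟩
  have h2 : HasDerivAt f ((f δ - 1) * (↑M⁻¹ : A)) 0 := by simpa [h0] using hd 0
  have h3 : HasDerivAt (fun x => f (x - s) * f s) ((f δ - 1) * (↑M⁻¹ : A) * f s) s := by
    apply HasDerivAt.mul_const
    have : HasDerivAt f ((f δ - 1) * (↑M⁻¹ : A)) (s - s) := by simpa using h2
    exact this.comp_sub_const s s
  refine h3.congr_of_eventuallyEq (Eventually.of_forall fun x => ?_)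
  simp [← hm]

/-- A continuous one-parameter group that is scaled by conjugation is polynomial. -/
lemma oneParam_poly {A : Type*} [NormedRing A] [NormedAlgebra ℝ A] [FiniteDimensional ℝ A]
    (f : ℝ → A) (hf : Continuous f) (h0 : f 0 = 1) (hm : ∀ s t, f (s + t) = f s * f t)
    (C C' : A) (hC : C' * C = 1) (hCC : C * C' = 1)
    (hconj : ∀ s, C * f s * C' = f (4 * s)) :
    ∃ (d : ℕ) (M : ℕ → A), ∀ s, f s = ∑ i ∈ Finset.range d, s ^ i • M i := by
  have : CompleteSpace A := FiniteDimensional.complete ℝ A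
  obtain ⟨N, hN⟩ := oneParam_hasDerivAt f hf h0 hm
  have hN4 : C * N * C' = (4:ℝ) • N := by
    have h1 : HasDerivAt (fun s => C * f s * C') (C * N * C') 0 := by
      have := ((hN 0).const_mul C).mul_const C'
      simpa [h0] using this
    have h2 : HasDerivAt (fun s : ℝ => f (4 * s)) ((4:ℝ) • N) 0 := by
      have h3 : HasDerivAt f N ((4:ℝ) * 0) := by simpa [h0] using hN 0
      have h4 : HasDerivAt (fun s : ℝ => 4 * s) 4 0 := by
        simpa using (hasDerivAt_id (0:ℝ)).const_mul 4
      exact h3.scomp 0 h4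
    simp_rw [hconj] at h1
    exact h1.unique h2
  have hpow : ∀ k : ℕ, C * N ^ k * C' = ((4:ℝ) ^ k) • N ^ k := by
    intro k
    induction k with
    | zero => simp [hCC]
    | succ k ih =>
      calc C * N ^ (k+1) * C' = (C * N ^ k * C') * (C * N * C') := by
            rw [pow_succ]
            simp only [mul_assoc]
            rw [← mul_assoc C' C, hC, one_mul]
        _ = _ := by rw [ih, hN4, smul_mul_smul_comm, pow_succ, pow_succ]
  have hnil : ∃ d, N ^ d = 0 := by
    by_contra! hcon
    let Φ : Module.End ℝ A := (LinearMap.mulRight ℝ C') ∘ₗ (LinearMap.mulLeft ℝ C)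
    have hli := Module.End.eigenvectors_linearIndependent' Φ (fun k : ℕ => (4:ℝ)^k)
      (pow_right_injective₀ (by norm_num) (by norm_num)) (fun k => N ^ k)
      (fun k => by
        refine ⟨?_, hcon k⟩
        rw [Module.End.mem_eigenspace_iff]
        simpa [Φ] using hpow k)
    have := hli.finite
    exact not_finite ℕ
  obtain ⟨d, hd⟩ := hnil
  have hexp : ∀ s, f s = NormedSpace.exp (s • N) := by
    intro s
    have hdz : ∀ t, HasDerivAt (fun t => NormedSpace.exp ((-t) • N) * f t) 0 t := by
      intro t
      have e1 : HasDerivAt (fun t : ℝ => NormedSpace.exp ((-t) • N))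
          (-(NormedSpace.exp ((-t) • N) * N)) t := by
        have := (hasDerivAt_exp_smul_const (𝕂 := ℝ) N (-t)).scomp t (hasDerivAt_neg t)
        simpa [Function.comp_def] using this
      have h3 := e1.mul (hN t)
      have h4 : -(NormedSpace.exp ((-t) • N) * N) * f t
          + NormedSpace.exp ((-t) • N) * (N * f t) = 0 := by
        rw [neg_mul, mul_assoc, neg_add_cancel]
      rw [h4] at h3
      exact h3
    have hconst : ∀ t, NormedSpace.exp ((-t) • N) * f t = 1 := by
      intro t
      have := is_const_of_deriv_eq_zero (f := fun t => NormedSpace.exp ((-t) • N) * f t)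
        (fun t => (hdz t).differentiableAt) (fun t => (hdz t).deriv) t 0
      simpa [h0] using this
    have hinv : NormedSpace.exp (s • N) * NormedSpace.exp ((-s) • N) = 1 := by
      let : NormedAlgebra ℚ A := NormedAlgebra.restrictScalars ℚ ℝ A
      rw [← NormedSpace.exp_add_of_commute]
      · simp
      · exact ((Commute.refl N).smul_left s).smul_right (-s)
    calc f s = (NormedSpace.exp (s • N) * NormedSpace.exp ((-s) • N)) * f s := by
          rw [hinv, one_mul]
      _ = _ := by rw [mul_assoc, hconst, mul_one]
  refine ⟨d, fun i => ((Nat.factorial i : ℝ))⁻¹ • N ^ i, fun s => ?_⟩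
  rw [hexp, NormedSpace.exp_eq_tsum ℝ]
  simp only
  rw [tsum_eq_sum (s := Finset.range d)]
  · refine Finset.sum_congr rfl fun i _ => ?_
    rw [smul_pow, smul_comm]
  · intro i hi
    have : d ≤ i := by simpa using hi
    rw [smul_pow, pow_eq_zero_of_le this hd, smul_zero, smul_zero]

/-- Laurent coefficients of a multiplicative family are recovered by fixed operators. -/
lemma laurent_coeff {A : Type*} [NormedRing A] [NormedAlgebra ℝ A]
    (D : ℝ → A) (m d : ℕ) (Q : ℕ → A)
    (hD : ∀ s, 0 < s → s ^ d • D s = ∑ i ∈ Finset.range m, s ^ i • Q i)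
    (hmul : ∀ s t, 0 < s → 0 < t → D (s * t) = D s * D t) (i : ℕ) (hi : i < m) :
    ∃ T : A, ∀ s, 0 < s → s ^ i • Q i = s ^ d • (T * D s) := by
  let t : Fin m → ℝ := fun j => (j : ℝ) + 1
  have ht : ∀ j, 0 < t j := fun j => by positivity
  have hinj : Function.Injective t := by
    intro a b h
    have : (a : ℝ) = b := by simpa [t] using h
    exact Fin.ext (by exact_mod_cast this)
  let M : Matrix (Fin m) (Fin m) ℝ := Matrix.vandermonde t
  have hdet : IsUnit M.det := (Matrix.det_vandermonde_ne_zero_iff.mpr hinj).isUnit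
  have hMM : M⁻¹ * M = 1 := Matrix.nonsing_inv_mul M hdet
  have hent : ∀ k : Fin m, ∑ j, M⁻¹ ⟨i, hi⟩ j * t j ^ (k : ℕ) = if (k : ℕ) = i then 1 else 0 := by
    intro k
    have := congrFun (congrFun hMM ⟨i, hi⟩) k
    rw [Matrix.mul_apply, Matrix.one_apply] at this
    simp only [M, Matrix.vandermonde_apply] at this
    rw [this]
    congr 1
    simp only [Fin.ext_iff, eq_iff_iff]
    exact eq_comm
  refine ⟨∑ j, (M⁻¹ ⟨i, hi⟩ j * t j ^ d) • D (t j), fun s hs => ?_⟩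
  have h1 : ∀ j, (s ^ d) • ((t j ^ d) • (D (t j) * D s))
      = ∑ k : Fin m, (t j ^ (k:ℕ) * s ^ (k:ℕ)) • Q k := by
    intro j
    rw [← hmul _ _ (ht j) hs, smul_smul, mul_comm, ← mul_pow, hD _ (mul_pos (ht j) hs),
      Finset.sum_range]
    simp_rw [mul_pow]
  calc s ^ i • Q i = ∑ k : Fin m, ((if (k:ℕ) = i then (1:ℝ) else 0) * s ^ (k:ℕ)) • Q k := by
        rw [Finset.sum_eq_single ⟨i, hi⟩]
        · simp
        · intro b _ hb
          have : (b : ℕ) ≠ i := fun h => hb (Fin.ext h)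
          simp [this]
        · simp
    _ = ∑ j, M⁻¹ ⟨i, hi⟩ j • ((s ^ d) • ((t j ^ d) • (D (t j) * D s))) := by
        simp_rw [h1, Finset.smul_sum]
        rw [Finset.sum_comm]
        refine Finset.sum_congr rfl fun k _ => ?_
        rw [← hent k, Finset.sum_mul, Finset.sum_smul]
        refine Finset.sum_congr rfl fun j _ => ?_
        rw [smul_smul, mul_assoc]
    _ = _ := by
        rw [Finset.sum_mul, Finset.smul_sum]
        refine Finset.sum_congr rfl fun j _ => ?_
        rw [smul_mul_assoc, smul_smul, smul_smul, smul_smul]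
        congr 1; ring

/-- The product of polynomial families evaluated at `s`, `2/s`, `s` is Laurent. -/
lemma laurent_of_poly {A : Type*} [NormedRing A] [NormedAlgebra ℝ A]
    (u l D : ℝ → A) (K : A) (d e : ℕ) (M N : ℕ → A)
    (hu : ∀ s, u s = ∑ i ∈ Finset.range d, s ^ i • M i)
    (hl : ∀ s, l s = ∑ i ∈ Finset.range e, s ^ i • N i)
    (hD : ∀ s, 0 < s → D s = u s * l (2 / s) * u s * K) :
    ∃ (m : ℕ) (Q : ℕ → A), ∀ s, 0 < s → s ^ e • D s = ∑ i ∈ Finset.range m, s ^ i • Q i := by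
  let P : Polynomial A := (∑ i ∈ Finset.range d, Polynomial.monomial i (M i)) *
    (∑ i ∈ Finset.range e, Polynomial.monomial (e - i) ((2:ℝ) ^ i • N i)) *
    (∑ i ∈ Finset.range d, Polynomial.monomial i (M i)) * Polynomial.C K
  refine ⟨P.natDegree + 1, P.coeff, fun s hs => ?_⟩
  have hev : ∀ R : Polynomial A, (∑ i ∈ Finset.range (R.natDegree + 1), s ^ i • R.coeff i)
      = R.eval (algebraMap ℝ A s) := by
    intro R
    rw [Polynomial.eval_eq_sum_range]
    refine Finset.sum_congr rfl fun i _ => ?_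
    rw [← map_pow, ← Algebra.commutes, Algebra.smul_def]
  have hc : ∀ a : A, Commute (algebraMap ℝ A s) a := fun a => Algebra.commutes s a
  have hmulev : ∀ R S : Polynomial A, (R * S).eval (algebraMap ℝ A s)
      = R.eval (algebraMap ℝ A s) * S.eval (algebraMap ℝ A s) := by
    intro R S
    exact Polynomial.eval₂_mul_noncomm _ _ fun k => (hc _).symm
  rw [hev, hD s hs, hmulev, hmulev, hmulev]
  have e1 : (∑ i ∈ Finset.range d, Polynomial.monomial i (M i)).eval (algebraMap ℝ A s) = u s := by
    rw [hu, Polynomial.eval_finsetSum]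
    refine Finset.sum_congr rfl fun i _ => ?_
    rw [Polynomial.eval_monomial, ← map_pow, ← Algebra.commutes, Algebra.smul_def]
  have e2 : (∑ i ∈ Finset.range e, Polynomial.monomial (e - i) ((2:ℝ) ^ i • N i)).eval
      (algebraMap ℝ A s) = s ^ e • l (2 / s) := by
    rw [hl, Polynomial.eval_finsetSum, Finset.smul_sum]
    refine Finset.sum_congr rfl fun i hi => ?_
    have hi' : i ≤ e := (Finset.mem_range.mp hi).le
    rw [Polynomial.eval_monomial, ← map_pow, ← Algebra.commutes, ← Algebra.smul_def, smul_smul,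
      smul_smul]
    congr 1
    rw [div_pow, pow_sub₀ _ hs.ne' hi']
    field_simp
  rw [e1, e2, Polynomial.eval_C]
  simp only [smul_mul_assoc, mul_smul_comm]

/-- The abstract dynamical lemma. -/
lemma fixed_of_bounded {V : Type*} [NormedAddCommGroup V] [NormedSpace ℝ V]
    (D : ℝ → V →L[ℝ] V) (m d : ℕ) (Q : ℕ → V →L[ℝ] V)
    (hD : ∀ s, 0 < s → s ^ d • D s = ∑ i ∈ Finset.range m, s ^ i • Q i)
    (hmul : ∀ s t, 0 < s → 0 < t → D (s * t) = D s * D t) (h1 : D 1 = 1) (v : V)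
    (s : ℕ → ℝ) (x : ℕ → V) (hs : ∀ᶠ k in atTop, 0 < s k) (hs0 : Tendsto s atTop (𝓝 0))
    (hx : Tendsto x atTop (𝓝 v)) (C : ℝ) (hC : ∀ᶠ k in atTop, ‖D (s k) (x k)‖ ≤ C)
    (s' : ℕ → ℝ) (x' : ℕ → V) (hs' : ∀ᶠ k in atTop, 0 < s' k) (hs0' : Tendsto s' atTop (𝓝 0))
    (hx' : Tendsto x' atTop (𝓝 v)) (C' : ℝ)
    (hC' : ∀ᶠ k in atTop, ‖D (s' k)⁻¹ (x' k)‖ ≤ C') :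
    ∀ t, 0 < t → D t v = v := by
  have key : ∀ i < m, i ≠ d → Q i v = 0 := by
    intro i hi hid
    obtain ⟨T, hT⟩ := laurent_coeff D m d Q hD hmul i hi
    rcases lt_or_gt_of_ne hid with hlt | hgt
    · have hlim : Tendsto (fun k => Q i (x k)) atTop (𝓝 (Q i v)) :=
        ((Q i).continuous.tendsto v).comp hx
      have hz : Tendsto (fun k => s k ^ (d - i) * (‖T‖ * C)) atTop (𝓝 0) := by
        have := (hs0.pow (d - i)).mul_const (‖T‖ * C)
        rwa [zero_pow (by omega), zero_mul] at this
      refine tendsto_nhds_unique hlim (squeeze_zero_norm' ?_ hz)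
      filter_upwards [hs, hC] with k hk hCk
      have e := hT (s k) hk
      have e' : Q i = s k ^ (d - i) • (T * D (s k)) := by
        have hne : s k ^ i ≠ 0 := by positivity
        have : s k ^ d = s k ^ i * s k ^ (d - i) := by rw [← pow_add]; congr 1; omega
        rw [this, mul_smul] at e
        exact smul_right_injective _ hne e
      rw [e']
      simp only [_root_.smul_apply, mul_apply_eq_comp, norm_smul, norm_pow,
        Real.norm_of_nonneg hk.le]
      gcongr
      exact (T.le_opNorm _).trans (by gcongr)
    · have hlim : Tendsto (fun k => Q i (x' k)) atTop (𝓝 (Q i v)) :=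
        ((Q i).continuous.tendsto v).comp hx'
      have hz : Tendsto (fun k => s' k ^ (i - d) * (‖T‖ * C')) atTop (𝓝 0) := by
        have := (hs0'.pow (i - d)).mul_const (‖T‖ * C')
        rwa [zero_pow (by omega), zero_mul] at this
      refine tendsto_nhds_unique hlim (squeeze_zero_norm' ?_ hz)
      filter_upwards [hs', hC'] with k hk hCk
      have e := hT (s' k)⁻¹ (by positivity)
      have e' : Q i = s' k ^ (i - d) • (T * D (s' k)⁻¹) := by
        have hne : (s' k)⁻¹ ^ i ≠ 0 := by positivity
        have : (s' k)⁻¹ ^ d = (s' k)⁻¹ ^ i * s' k ^ (i - d) := by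
          obtain ⟨j, rfl⟩ := Nat.exists_eq_add_of_lt hgt
          have : d + j + 1 - d = j + 1 := by omega
          rw [this, add_assoc, pow_add, mul_assoc, ← mul_pow, inv_mul_cancel₀ hk.ne', one_pow,
            mul_one]
        rw [this, mul_smul] at e
        exact smul_right_injective _ hne e
      rw [e']
      simp only [_root_.smul_apply, mul_apply_eq_comp, norm_smul, norm_pow,
        Real.norm_of_nonneg hk.le]
      gcongr
      exact (T.le_opNorm _).trans (by gcongr)
  have hconst : ∀ t, 0 < t → D t v = if d < m then Q d v else 0 := by
    intro t ht
    have e := congrArg (fun L : V →L[ℝ] V => L v) (hD t ht)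
    simp only [_root_.smul_apply, _root_.sum_apply] at e
    have hne : t ^ d ≠ 0 := by positivity
    apply smul_right_injective V hne
    simp only
    rw [e]
    split_ifs with h
    · rw [Finset.sum_eq_single_of_mem d (Finset.mem_range.mpr h)]
      intro b hb hbd
      rw [key b (Finset.mem_range.mp hb) hbd, smul_zero]
    · rw [smul_zero]
      refine Finset.sum_eq_zero fun b hb => ?_
      have := Finset.mem_range.mp hb
      rw [key b this (by omega), smul_zero]
  intro t ht
  rw [hconst t ht, ← hconst 1 one_pos, h1]
  rfl

section Basics
variable {n : ℕ}

lemma lorB_comm (x y : Fin (n + 1) → ℝ) : lorB n x y = lorB n y x := by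
  unfold lorB
  have : ∀ i, x i * y i = y i * x i := fun i => mul_comm _ _
  simp_rw [this]; ring

lemma lorB_add_left (x x' y : Fin (n + 1) → ℝ) :
    lorB n (x + x') y = lorB n x y + lorB n x' y := by
  unfold lorB
  have : ∀ i : Fin (n+1), (if i ≠ 0 ∧ i ≠ Fin.last n then (x + x') i * y i else 0)
    = (if i ≠ 0 ∧ i ≠ Fin.last n then x i * y i else 0) +
      (if i ≠ 0 ∧ i ≠ Fin.last n then x' i * y i else 0) := by
    intro i; split_ifs <;> simp [add_mul]
  simp_rw [this, Finset.sum_add_distrib, Pi.add_apply]; ring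

lemma lorB_smul_left (c : ℝ) (x y : Fin (n + 1) → ℝ) :
    lorB n (c • x) y = c * lorB n x y := by
  unfold lorB
  have : ∀ i : Fin (n+1), (if i ≠ 0 ∧ i ≠ Fin.last n then (c • x) i * y i else 0)
    = c * (if i ≠ 0 ∧ i ≠ Fin.last n then x i * y i else 0) := by
    intro i; split_ifs <;> simp [mul_assoc]
  simp_rw [this, ← Finset.mul_sum, Pi.smul_apply, smul_eq_mul]; ring

lemma lorB_add_right (x y y' : Fin (n + 1) → ℝ) :
    lorB n x (y + y') = lorB n x y + lorB n x y' := by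
  rw [lorB_comm, lorB_add_left, lorB_comm y, lorB_comm y']

lemma lorB_smul_right (c : ℝ) (x y : Fin (n + 1) → ℝ) :
    lorB n x (c • y) = c * lorB n x y := by
  rw [lorB_comm, lorB_smul_left, lorB_comm]

lemma lorB_neg_left (x y : Fin (n + 1) → ℝ) : lorB n (-x) y = - lorB n x y := by
  rw [← neg_one_smul ℝ x, lorB_smul_left]; ring

lemma lorB_neg_right (x y : Fin (n + 1) → ℝ) : lorB n x (-y) = - lorB n x y := by
  rw [← neg_one_smul ℝ y, lorB_smul_right]; ring

lemma lorB_sub_left (x x' y : Fin (n + 1) → ℝ) :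
    lorB n (x - x') y = lorB n x y - lorB n x' y := by
  rw [sub_eq_add_neg, lorB_add_left, lorB_neg_left]; ring

lemma lorB_sub_right (x y y' : Fin (n + 1) → ℝ) :
    lorB n x (y - y') = lorB n x y - lorB n x y' := by
  rw [sub_eq_add_neg, lorB_add_right, lorB_neg_right]; ring

lemma lorQ_eq (x : Fin (n + 1) → ℝ) : lorQ n x = lorB n x x := by
  unfold lorQ lorB
  simp_rw [pow_two]; ring

lemma lorB_zero_left (x : Fin (n + 1) → ℝ) : lorB n 0 x = 0 := by
  rw [← zero_smul ℝ x, lorB_smul_left, zero_mul]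

lemma lorB_zero_right (x : Fin (n + 1) → ℝ) : lorB n x 0 = 0 := by
  rw [lorB_comm, lorB_zero_left]

lemma continuous_lorB : Continuous fun z : (Fin (n + 1) → ℝ) × (Fin (n + 1) → ℝ) =>
    lorB n z.1 z.2 := by
  unfold lorB
  refine Continuous.add (by fun_prop) (continuous_finsetSum _ fun i _ => ?_)
  split_ifs <;> fun_prop

lemma tendsto_lorB {α : Type*} {F : Filter α} {f g : α → Fin (n + 1) → ℝ} {a b}
    (hf : Tendsto f F (𝓝 a)) (hg : Tendsto g F (𝓝 b)) :
    Tendsto (fun k => lorB n (f k) (g k)) F (𝓝 (lorB n a b)) :=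
  (continuous_lorB.tendsto (a, b)).comp (hf.prodMk_nhds hg)

lemma lorB_cont {α : Type*} [TopologicalSpace α] {f g : α → Fin (n + 1) → ℝ}
    (hf : Continuous f) (hg : Continuous g) : Continuous (fun k => lorB n (f k) (g k)) :=
  continuous_lorB.comp (hf.prodMk hg)

lemma lorAct_add (g : LorentzGrp n) (x y) : lorAct g (x + y) = lorAct g x + lorAct g y :=
  Matrix.mulVec_add _ _ _

lemma lorAct_smul (g : LorentzGrp n) (c : ℝ) (x) : lorAct g (c • x) = c • lorAct g x :=
  Matrix.mulVec_smul _ _ _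

lemma lorAct_neg (g : LorentzGrp n) (x) : lorAct g (-x) = - lorAct g x :=
  Matrix.mulVec_neg _ _

lemma lorAct_sub (g : LorentzGrp n) (x y) : lorAct g (x - y) = lorAct g x - lorAct g y :=
  Matrix.mulVec_sub _ _ _

lemma lorAct_one (x) : lorAct (1 : LorentzGrp n) x = x := by
  simp [lorAct]

lemma lorAct_mul (g h : LorentzGrp n) (x) : lorAct (g * h) x = lorAct g (lorAct h x) := by
  simp [lorAct, Matrix.mulVec_mulVec]

lemma lorAct_inv_act (g : LorentzGrp n) (x) : lorAct g⁻¹ (lorAct g x) = x := by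
  rw [← lorAct_mul, inv_mul_cancel, lorAct_one]

lemma lorAct_act_inv (g : LorentzGrp n) (x) : lorAct g (lorAct g⁻¹ x) = x := by
  rw [← lorAct_mul, mul_inv_cancel, lorAct_one]

lemma lorQ_act (g : LorentzGrp n) (x) : lorQ n (lorAct g x) = lorQ n x := g.2 x

lemma lorB_act (g : LorentzGrp n) (x y) : lorB n (lorAct g x) (lorAct g y) = lorB n x y := by
  have h := lorQ_act g (x + y)
  have h1 := lorQ_act g x
  have h2 := lorQ_act g y
  simp only [lorQ_eq, lorAct_add, lorB_add_left, lorB_add_right] at h h1 h2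
  have e1 := lorB_comm (lorAct g y) (lorAct g x)
  have e2 := lorB_comm y x
  linarith

lemma lorB_act_left (g : LorentzGrp n) (x y) : lorB n (lorAct g x) y = lorB n x (lorAct g⁻¹ y) := by
  rw [← lorB_act g x, lorAct_act_inv]

lemma lorGrp_ext {g h : LorentzGrp n} (H : ∀ x, lorAct g x = lorAct h x) : g = h := by
  apply Subtype.ext
  apply Units.ext
  apply Matrix.toLin'.injective
  apply LinearMap.ext
  intro x
  simpa [lorAct] using H x

lemma continuous_lorAct (x : Fin (n + 1) → ℝ) : Continuous fun g : LorentzGrp n => lorAct g x := by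
  unfold lorAct
  exact Continuous.matrix_mulVec (Units.continuous_val.comp continuous_subtype_val) continuous_const

/-- Build an element of the Lorentz group from a pair of inverse linear maps. -/
def mkLor (f g : (Fin (n + 1) → ℝ) →ₗ[ℝ] (Fin (n + 1) → ℝ)) (h1 : f ∘ₗ g = LinearMap.id)
    (h2 : g ∘ₗ f = LinearMap.id) (hq : ∀ x, lorQ n (f x) = lorQ n x) : LorentzGrp n :=
  ⟨⟨LinearMap.toMatrix' f, LinearMap.toMatrix' g,
    by rw [← LinearMap.toMatrix'_comp, h1, LinearMap.toMatrix'_id],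
    by rw [← LinearMap.toMatrix'_comp, h2, LinearMap.toMatrix'_id]⟩,
    fun x => by
      change lorQ n ((LinearMap.toMatrix' f).mulVec x) = _
      rw [LinearMap.toMatrix'_mulVec]; exact hq x⟩

lemma mkLor_act (f g : (Fin (n + 1) → ℝ) →ₗ[ℝ] (Fin (n + 1) → ℝ)) (h1 h2 hq) (x) :
    lorAct (mkLor f g h1 h2 hq) x = f x := by
  change (LinearMap.toMatrix' f).mulVec x = f x
  rw [LinearMap.toMatrix'_mulVec]

/-- The linear map underlying an Eichler transformation. -/
def eichL (p x : Fin (n + 1) → ℝ) : (Fin (n + 1) → ℝ) →ₗ[ℝ] (Fin (n + 1) → ℝ) where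
  toFun y := y + lorB n y p • x - lorB n y x • p - (lorB n x x / 2 * lorB n y p) • p
  map_add' y z := by simp only [lorB_add_left]; module
  map_smul' c y := by simp only [lorB_smul_left, RingHom.id_apply]; module

lemma eichL_apply (p x y : Fin (n + 1) → ℝ) : eichL p x y =
    y + lorB n y p • x - lorB n y x • p - (lorB n x x / 2 * lorB n y p) • p := rfl

lemma eichL_comp (p x x' : Fin (n + 1) → ℝ) (hp : lorB n p p = 0) (hx : lorB n p x = 0)
    (hx' : lorB n p x' = 0) (y) : eichL p x (eichL p x' y) = eichL p (x + x') y := by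
  have h1 : lorB n x p = 0 := by rw [lorB_comm, hx]
  have h2 : lorB n x' p = 0 := by rw [lorB_comm, hx']
  have h3 := lorB_comm x' x
  simp only [eichL_apply, lorB_add_left, lorB_add_right, lorB_sub_left, lorB_smul_left, hp, hx, hx', h1, h2,
    h3]
  module

lemma eichL_zero (p y : Fin (n + 1) → ℝ) : eichL p 0 y = y := by
  simp [eichL_apply, lorB_zero_left, lorB_zero_right]

lemma eichL_comp_neg (p x : Fin (n + 1) → ℝ) (hp : lorB n p p = 0) (hx : lorB n p x = 0) :
    eichL p x ∘ₗ eichL p (-x) = LinearMap.id := by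
  apply LinearMap.ext
  intro y
  rw [LinearMap.comp_apply, eichL_comp p x (-x) hp hx (by rw [lorB_neg_right, hx, neg_zero]),
    add_neg_cancel, eichL_zero, LinearMap.id_apply]

/-- Eichler transformations. -/
def eich (p : Fin (n + 1) → ℝ) (hp : lorB n p p = 0) (x : {x // lorB n p x = 0}) : LorentzGrp n :=
  mkLor (eichL p x) (eichL p (-x)) (eichL_comp_neg p x hp x.2)
    (by
      have := eichL_comp_neg p (-x) hp (by rw [lorB_neg_right, x.2, neg_zero])
      rwa [neg_neg] at this)
    (by
      intro y
      have h1 : lorB n x p = 0 := by rw [lorB_comm, x.2]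
      have h2 := x.2
      have h3 := lorB_comm p y
      have h4 := lorB_comm x y
      simp only [lorQ_eq, eichL_apply, lorB_add_left, lorB_add_right, lorB_sub_left, lorB_sub_right,
        lorB_smul_left, lorB_smul_right, hp, h1, h2, h3, h4]
      ring)

lemma eich_act (p : Fin (n + 1) → ℝ) (hp : lorB n p p = 0) (x : {x // lorB n p x = 0}) (y) :
    lorAct (eich p hp x) y =
    y + lorB n y p • (x : Fin (n + 1) → ℝ) - lorB n y x • p - (lorB n x x / 2 * lorB n y p) • p :=
  mkLor_act _ _ _ _ _ y

lemma continuous_eichL (p y : Fin (n + 1) → ℝ) : Continuous fun x => eichL p x y := by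
  simp only [eichL_apply]
  have h1 : Continuous fun x : Fin (n + 1) → ℝ => lorB n y x := lorB_cont continuous_const continuous_id
  have h2 : Continuous fun x : Fin (n + 1) → ℝ => lorB n x x := lorB_cont continuous_id continuous_id
  fun_prop

lemma continuous_eich (p : Fin (n + 1) → ℝ) (hp : lorB n p p = 0) : Continuous (eich p hp) := by
  refine Continuous.subtype_mk (Units.continuous_iff.mpr ⟨?_, ?_⟩) _
  · refine continuous_matrix fun i j => ?_
    exact (continuous_apply i).comp ((continuous_eichL p (Pi.single j 1)).comp continuous_subtype_val)
  · refine continuous_matrix fun i j => ?_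
    exact (continuous_apply i).comp
      ((continuous_eichL p (Pi.single j 1)).comp continuous_subtype_val.neg)

/-- The linear map underlying a boost. -/
def boostL (p r : Fin (n + 1) → ℝ) (c : ℝ) : (Fin (n + 1) → ℝ) →ₗ[ℝ] (Fin (n + 1) → ℝ) where
  toFun y := y + ((c - 1) * lorB n y r) • p + ((c⁻¹ - 1) * lorB n y p) • r
  map_add' y z := by simp only [lorB_add_left]; module
  map_smul' c y := by simp only [lorB_smul_left, RingHom.id_apply]; module

lemma boostL_apply (p r : Fin (n + 1) → ℝ) (c : ℝ) (y) : boostL p r c y =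
  y + ((c - 1) * lorB n y r) • p + ((c⁻¹ - 1) * lorB n y p) • r := rfl

lemma boostL_comp (p r : Fin (n + 1) → ℝ) (hp : lorB n p p = 0) (hr : lorB n r r = 0)
    (hpr : lorB n p r = 1) (c d : ℝ) (y) :
    boostL p r c (boostL p r d y) = boostL p r (c * d) y := by
  have h1 : lorB n r p = 1 := by rw [lorB_comm, hpr]
  simp only [boostL_apply, lorB_add_left, lorB_smul_left, hp, hr, h1, hpr, mul_inv]
  module

lemma boostL_inv (p r : Fin (n + 1) → ℝ) (hp : lorB n p p = 0) (hr : lorB n r r = 0)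
    (hpr : lorB n p r = 1) (c : ℝ) (hc : c ≠ 0) :
    boostL p r c ∘ₗ boostL p r c⁻¹ = LinearMap.id := by
  apply LinearMap.ext
  intro y
  rw [LinearMap.comp_apply, boostL_comp p r hp hr hpr, mul_inv_cancel₀ hc]
  simp [boostL_apply]

/-- A null pair, normalised. -/
structure NP (p r : Fin (n + 1) → ℝ) : Prop where
  hp : lorB n p p = 0
  hr : lorB n r r = 0
  hpr : lorB n p r = 1

lemma NP.symm {p r : Fin (n + 1) → ℝ} (h : NP p r) : NP r p :=
  ⟨h.hr, h.hp, by rw [lorB_comm, h.hpr]⟩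

/-- The boost scaling `p` by `c` and `r` by `c⁻¹`. -/
def boost (p r : Fin (n + 1) → ℝ) (h : NP p r) (c : {c : ℝ // 0 < c}) : LorentzGrp n :=
  mkLor (boostL p r c) (boostL p r (c : ℝ)⁻¹) (boostL_inv p r h.hp h.hr h.hpr c c.2.ne')
    (by
      have := boostL_inv p r h.hp h.hr h.hpr (c:ℝ)⁻¹ (inv_ne_zero c.2.ne')
      rwa [inv_inv] at this)
    (by
      intro y
      have h1 := h.symm.hpr
      have h3 := lorB_comm p y
      have h4 := lorB_comm r y
      have hc := c.2.ne'
      simp only [lorQ_eq, boostL_apply, lorB_add_left, lorB_add_right,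
        lorB_smul_left, lorB_smul_right, h.hp, h.hr, h1, h.hpr, h3, h4]
      field_simp
      ring)

lemma boost_act (p r : Fin (n + 1) → ℝ) (h : NP p r) (c : {c : ℝ // 0 < c}) (y) :
    lorAct (boost p r h c) y =
      y + (((c : ℝ) - 1) * lorB n y r) • p + (((c : ℝ)⁻¹ - 1) * lorB n y p) • r :=
  mkLor_act _ _ _ _ _ y

lemma boost_mul (p r : Fin (n + 1) → ℝ) (h : NP p r) (c d : {c : ℝ // 0 < c}) :
    boost p r h c * boost p r h d = boost p r h (c * d) := by
  apply lorGrp_ext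
  intro y
  rw [lorAct_mul]
  simp only [boost, mkLor_act]
  exact boostL_comp p r h.hp h.hr h.hpr _ _ _

lemma boost_one (p r : Fin (n + 1) → ℝ) (h : NP p r) : boost p r h 1 = 1 := by
  apply lorGrp_ext
  intro y
  simp [boost_act, lorAct_one]

lemma boost_swap (p r : Fin (n + 1) → ℝ) (h : NP p r) (c : {c : ℝ // 0 < c}) :
    boost r p h.symm c = boost p r h ⟨(c : ℝ)⁻¹, inv_pos.mpr c.2⟩ := by
  apply lorGrp_ext
  intro y
  simp only [boost_act, inv_inv]
  module

lemma boost_inv (p r : Fin (n + 1) → ℝ) (h : NP p r) (c : {c : ℝ // 0 < c}) :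
    (boost p r h c)⁻¹ = boost p r h ⟨(c : ℝ)⁻¹, inv_pos.mpr c.2⟩ := by
  rw [inv_eq_iff_mul_eq_one, boost_mul, ← boost_one p r h]
  congr 1
  exact Subtype.ext (mul_inv_cancel₀ c.2.ne')

lemma eich_mul (p : Fin (n + 1) → ℝ) (hp : lorB n p p = 0) (x y z : {x // lorB n p x = 0})
    (hz : (z : Fin (n + 1) → ℝ) = x + y) : eich p hp x * eich p hp y = eich p hp z := by
  apply lorGrp_ext
  intro w
  rw [lorAct_mul]
  simp only [eich, mkLor_act]
  rw [eichL_comp p x y hp x.2 y.2, hz]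

lemma eich_zero (p : Fin (n + 1) → ℝ) (hp : lorB n p p = 0) (z : {x // lorB n p x = 0})
    (hz : (z : Fin (n + 1) → ℝ) = 0) : eich p hp z = 1 := by
  apply lorGrp_ext
  intro w
  simp only [eich, mkLor_act, hz, eichL_zero, lorAct_one]

lemma eich_inv (p : Fin (n + 1) → ℝ) (hp : lorB n p p = 0) (x y : {x // lorB n p x = 0})
    (hy : (y : Fin (n + 1) → ℝ) = -x) : (eich p hp x)⁻¹ = eich p hp y := by
  rw [inv_eq_iff_mul_eq_one, eich_mul p hp x y ⟨0, lorB_zero_right _⟩ (by simp [hy]),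
    eich_zero p hp _ rfl]

/-- conjugating a boost -/
lemma boost_conj (p r p' r' : Fin (n + 1) → ℝ) (h : NP p r) (h' : NP p' r') (g : LorentzGrp n)
    (hgp : lorAct g p = p') (hgr : lorAct g r = r') (c : {c : ℝ // 0 < c}) :
    g * boost p r h c * g⁻¹ = boost p' r' h' c := by
  apply lorGrp_ext
  intro y
  simp only [lorAct_mul, boost_act, lorAct_add, lorAct_smul, lorAct_act_inv, hgp, hgr]
  have e1 : lorB n (lorAct g⁻¹ y) r = lorB n y r' := by
    rw [lorB_act_left, inv_inv, hgr]
  have e2 : lorB n (lorAct g⁻¹ y) p = lorB n y p' := by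
    rw [lorB_act_left, inv_inv, hgp]
  rw [e1, e2]

lemma eich_conj (p : Fin (n + 1) → ℝ) (hp : lorB n p p = 0) (x z : {x // lorB n p x = 0})
    (g : LorentzGrp n) (c : ℝ)
    (hgp : lorAct g p = c • p) (hgx : lorAct g x = x) (hz : (z : Fin (n + 1) → ℝ) = c • x) :
    g * eich p hp x * g⁻¹ = eich p hp z := by
  apply lorGrp_ext
  intro y
  simp only [lorAct_mul, eich_act, lorAct_add, lorAct_sub, lorAct_smul, lorAct_act_inv, hgp, hgx]
  have e1 : lorB n (lorAct g⁻¹ y) x = lorB n y x := by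
    rw [lorB_act_left, inv_inv, hgx]
  have e2 : lorB n (lorAct g⁻¹ y) p = c * lorB n y p := by
    rw [lorB_act_left, inv_inv, hgp, lorB_smul_right]
  rw [e1, e2, hz]
  simp only [lorB_smul_left, lorB_smul_right]
  module

/-- Whitehead relation. -/
lemma whitehead_act (p r w : Fin (n + 1) → ℝ) (h : NP p r) (hpw : lorB n p w = 0)
    (hrw : lorB n r w = 0) (hw : lorB n w w = 1) (s : ℝ) (hs : 0 < s)
    (x : {x // lorB n p x = 0}) (z : {x // lorB n r x = 0})
    (hx : (x : Fin (n + 1) → ℝ) = s • w) (hz : (z : Fin (n + 1) → ℝ) = (2 / s) • w) (y) :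
    lorAct (eich p h.hp x * eich r h.hr z * eich p h.hp x) y =
      y - (2 * lorB n y w) • w - (lorB n y r) • p - (lorB n y p) • r
        - (2 / s ^ 2 * lorB n y r) • r - (s ^ 2 / 2 * lorB n y p) • p := by
  have h1 := h.symm.hpr
  have h2 : lorB n w p = 0 := by rw [lorB_comm, hpw]
  have h3 : lorB n w r = 0 := by rw [lorB_comm, hrw]
  simp only [lorAct_mul, eich_act, hx, hz, lorB_add_left, lorB_sub_left, lorB_smul_left,
    lorB_smul_right, h.hp, h.hr, h.hpr, h1, h2, h3, hw, hpw, hrw]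
  match_scalars <;> field_simp <;> ring

end Basics

section Rep
variable {n : ℕ}

lemma whitehead_boost (p r w : Fin (n + 1) → ℝ) (h : NP p r) (hpw : lorB n p w = 0)
    (hrw : lorB n r w = 0) (hw : lorB n w w = 1) (s : ℝ) (hs : 0 < s)
    (x x1 : {x // lorB n p x = 0}) (z z1 : {x // lorB n r x = 0})
    (hx : (x : Fin (n + 1) → ℝ) = s • w) (hz : (z : Fin (n + 1) → ℝ) = (2 / s) • w)
    (hx1 : (x1 : Fin (n + 1) → ℝ) = (1 : ℝ) • w)
    (hz1 : (z1 : Fin (n + 1) → ℝ) = (2 / 1 : ℝ) • w) (c : {c : ℝ // 0 < c}) (hc : (c : ℝ) = s ^ 2) :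
    boost p r h c = (eich p h.hp x * eich r h.hr z * eich p h.hp x) *
      (eich p h.hp x1 * eich r h.hr z1 * eich p h.hp x1) := by
  apply lorGrp_ext
  intro y
  have h1 := h.symm.hpr
  have h2 : lorB n w p = 0 := by rw [lorB_comm, hpw]
  have h3 : lorB n w r = 0 := by rw [lorB_comm, hrw]
  rw [lorAct_mul, whitehead_act p r w h hpw hrw hw s hs x z hx hz,
    whitehead_act p r w h hpw hrw hw 1 one_pos x1 z1 hx1 hz1, boost_act, hc]
  simp only [lorB_sub_left, lorB_smul_left, h.hp, h.hr, h.hpr, h1, h2, h3, hw, hpw, hrw]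
  match_scalars <;> field_simp <;> ring

lemma boost_p (p r : Fin (n + 1) → ℝ) (h : NP p r) (c : {c : ℝ // 0 < c}) :
    lorAct (boost p r h c) p = (c : ℝ) • p := by
  simp only [boost_act, h.hp, h.hpr]; module

lemma boost_r (p r : Fin (n + 1) → ℝ) (h : NP p r) (c : {c : ℝ // 0 < c}) :
    lorAct (boost p r h c) r = (c : ℝ)⁻¹ • r := by
  simp only [boost_act, h.hr, h.symm.hpr]; module

lemma boost_perp (p r : Fin (n + 1) → ℝ) (h : NP p r) (c : {c : ℝ // 0 < c}) (y)
    (h1 : lorB n y p = 0) (h2 : lorB n y r = 0) : lorAct (boost p r h c) y = y := by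
  simp only [boost_act, h1, h2]; module

variable {V : Type*} [NormedAddCommGroup V] [NormedSpace ℝ V]

lemma eich_poly [FiniteDimensional ℝ V] (ρ : LorentzGrp n →* (V →L[ℝ] V))
    (hρ : Continuous fun g => ρ g)
    (p r w : Fin (n + 1) → ℝ) (h : NP p r) (hpw : lorB n p w = 0) (hrw : lorB n r w = 0) :
    ∃ (d : ℕ) (M : ℕ → V →L[ℝ] V), ∀ s : ℝ,
      ρ (eich p h.hp ⟨s • w, by rw [lorB_smul_right, hpw, mul_zero]⟩)
        = ∑ i ∈ Finset.range d, s ^ i • M i := by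
  have h4 : (0:ℝ) < 4 := by norm_num
  apply oneParam_poly (fun s : ℝ => ρ (eich p h.hp ⟨s • w, by rw [lorB_smul_right, hpw, mul_zero]⟩))
    (C := ρ (boost p r h ⟨4, h4⟩)) (C' := ρ (boost p r h ⟨4, h4⟩)⁻¹)
  · refine hρ.comp ((continuous_eich p h.hp).comp (Continuous.subtype_mk ?_ _))
    fun_prop
  · rw [eich_zero p h.hp _ (zero_smul ℝ w), map_one]
  · intro s t
    rw [← map_mul]
    congr 1
    symm
    apply eich_mul
    exact add_smul s t w
  · rw [← map_mul, inv_mul_cancel, map_one]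
  · rw [← map_mul, mul_inv_cancel, map_one]
  · intro s
    rw [← map_mul, ← map_mul]
    congr 1
    apply eich_conj p h.hp _ _ _ 4 (boost_p p r h _)
    · apply boost_perp
      · rw [lorB_smul_left, lorB_comm, hpw, mul_zero]
      · rw [lorB_smul_left, lorB_comm, hrw, mul_zero]
    · exact mul_smul 4 s w

/-- The boost family with a real parameter. -/
def boostFam (ρ : LorentzGrp n →* (V →L[ℝ] V)) (p r : Fin (n + 1) → ℝ) (h : NP p r) (s : ℝ) :
    V →L[ℝ] V := if hs : 0 < s then ρ (boost p r h ⟨s ^ 2, pow_pos hs 2⟩) else 1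

lemma boostFam_pos (ρ : LorentzGrp n →* (V →L[ℝ] V)) (p r : Fin (n + 1) → ℝ) (h : NP p r) (s : ℝ)
    (hs : 0 < s) : boostFam ρ p r h s = ρ (boost p r h ⟨s ^ 2, pow_pos hs 2⟩) := dif_pos hs

lemma boost_laurent [FiniteDimensional ℝ V] (ρ : LorentzGrp n →* (V →L[ℝ] V))
    (hρ : Continuous fun g => ρ g)
    (p r w : Fin (n + 1) → ℝ) (h : NP p r) (hpw : lorB n p w = 0) (hrw : lorB n r w = 0)
    (hw : lorB n w w = 1) :
    ∃ (e m : ℕ) (Q : ℕ → V →L[ℝ] V), ∀ s : ℝ, 0 < s →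
      s ^ e • boostFam ρ p r h s = ∑ i ∈ Finset.range m, s ^ i • Q i := by
  obtain ⟨d, M, hM⟩ := eich_poly ρ hρ p r w h hpw hrw
  obtain ⟨e, N, hN⟩ := eich_poly ρ hρ r p w h.symm hrw hpw
  refine ⟨e, ?_⟩
  refine laurent_of_poly _ _ (boostFam ρ p r h) (ρ (
    eich p h.hp ⟨(1:ℝ) • w, by rw [lorB_smul_right, hpw, mul_zero]⟩ *
    eich r h.hr ⟨(2/1:ℝ) • w, by rw [lorB_smul_right, hrw, mul_zero]⟩ *
    eich p h.hp ⟨(1:ℝ) • w, by rw [lorB_smul_right, hpw, mul_zero]⟩)) d e M N hM hN ?_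
  intro s hs
  rw [boostFam_pos _ _ _ _ _ hs, ← map_mul, ← map_mul, ← map_mul]
  congr 1
  exact whitehead_boost p r w h hpw hrw hw s hs _ _ _ _ rfl rfl rfl rfl _ rfl

lemma lorB_basePt (x : Fin (n + 1) → ℝ) (hn : 2 ≤ n) :
    lorB n (basePt n) x = x (Fin.last n) - x 0 := by
  have h0 : Fin.last n ≠ 0 := by
    intro h; have := congrArg Fin.val h; simp at this; omega
  unfold lorB
  rw [Finset.sum_eq_zero]
  · simp [basePt, h0]; ring
  · intro i _
    split_ifs with h
    · simp [basePt, h.1, h.2]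
    · rfl

lemma lorB_euclid (x y : Fin (n + 1) → ℝ) (hn : 2 ≤ n) :
    lorB n x y + lorB n (basePt n) x * lorB n (basePt n) y = x ⬝ᵥ y := by
  have h0 : Fin.last n ≠ 0 := by
    intro h; have := congrArg Fin.val h; simp at this; omega
  rw [lorB_basePt x hn, lorB_basePt y hn]
  unfold lorB dotProduct
  have : ∀ i : Fin (n+1), x i * y i = (if i ≠ 0 ∧ i ≠ Fin.last n then x i * y i else 0)
      + (if i = 0 then x i * y i else 0) + (if i = Fin.last n then x i * y i else 0) := by
    intro i
    by_cases h1 : i = 0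
    · subst h1; simp [h0.symm]
    · by_cases h2 : i = Fin.last n
      · subst h2; simp [h0]
      · simp [h1, h2]
  rw [Finset.sum_congr rfl fun i _ => this i, Finset.sum_add_distrib, Finset.sum_add_distrib]
  simp
  ring

/-- `ρ` is bounded on the stabiliser of the base point. -/
lemma bounded_stab (hn : 2 ≤ n) (ρ : LorentzGrp n →* (V →L[ℝ] V))
    (hρ : Continuous fun g => ρ g) :
    ∃ C, ∀ g : LorentzGrp n, lorAct g (basePt n) = basePt n → ‖ρ g‖ ≤ C := by
  let S : Set (Matrix (Fin (n+1)) (Fin (n+1)) ℝ) :=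
    {M | Mᵀ * M = 1 ∧ ∀ x, lorQ n (M.mulVec x) = lorQ n x}
  have hcl : IsClosed S := by
    apply IsClosed.inter
    · exact isClosed_eq (by fun_prop) continuous_const
    · have : {M : Matrix (Fin (n+1)) (Fin (n+1)) ℝ | ∀ x, lorQ n (M.mulVec x) = lorQ n x}
        = ⋂ x, {M | lorQ n (M.mulVec x) = lorQ n x} := by ext; simp
      change IsClosed {M : Matrix (Fin (n+1)) (Fin (n+1)) ℝ | ∀ x, lorQ n (M.mulVec x) = lorQ n x}
      rw [this]
      refine isClosed_iInter fun x => isClosed_eq ?_ continuous_const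
      simp only [lorQ_eq]
      have : Continuous fun M : Matrix (Fin (n+1)) (Fin (n+1)) ℝ => M.mulVec x :=
        Continuous.matrix_mulVec continuous_id continuous_const
      exact lorB_cont this this
  have hcpt : IsCompact S := by
    have hbox : IsCompact (Set.pi Set.univ fun _ : Fin (n+1) =>
        Set.pi Set.univ fun _ : Fin (n+1) => Set.Icc (-1:ℝ) 1) :=
      isCompact_univ_pi fun _ => isCompact_univ_pi fun _ => isCompact_Icc
    refine IsCompact.of_isClosed_subset hbox hcl ?_
    intro M hM i _ j _
    have h1 := congrFun (congrFun hM.1 j) j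
    rw [Matrix.mul_apply, Matrix.one_apply_eq] at h1
    simp only [Matrix.transpose_apply] at h1
    have h2 : M i j * M i j ≤ ∑ k, M k j * M k j :=
      Finset.single_le_sum (f := fun k => M k j * M k j) (fun k _ => mul_self_nonneg _)
        (Finset.mem_univ i)
    rw [h1] at h2
    exact abs_le.mp (abs_le_one_iff_mul_self_le_one.mpr h2)
  have : CompactSpace S := isCompact_iff_compactSpace.mp hcpt
  let φ : S → LorentzGrp n := fun M =>
    ⟨⟨M.1, M.1ᵀ, mul_eq_one_comm.mp M.2.1, M.2.1⟩, M.2.2⟩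
  have hφ : Continuous φ := by
    refine Continuous.subtype_mk (Units.continuous_iff.mpr ⟨?_, ?_⟩) _
    · exact continuous_subtype_val
    · exact continuous_subtype_val.matrix_transpose
  obtain ⟨C, hC⟩ := (isCompact_range (hρ.comp hφ)).isBounded.exists_norm_le
  refine ⟨C, fun g hg => ?_⟩
  have hgS : ((g : GL (Fin (n + 1)) ℝ) : Matrix (Fin (n + 1)) (Fin (n + 1)) ℝ) ∈ S := by
    refine ⟨?_, g.2⟩
    have hdot : ∀ x y, lorAct g x ⬝ᵥ lorAct g y = x ⬝ᵥ y := by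
      intro x y
      have hb : ∀ x, lorB n (basePt n) (lorAct g x) = lorB n (basePt n) x := by
        intro x
        conv_lhs => rw [← hg]
        exact lorB_act g _ _
      rw [← lorB_euclid _ _ hn, ← lorB_euclid _ _ hn, lorB_act, hb, hb]
    ext i j
    have := hdot (Pi.single i 1) (Pi.single j 1)
    simp only [lorAct, Matrix.mulVec_single_one] at this
    rw [Matrix.mul_apply]
    simp only [dotProduct, Matrix.col_apply] at this
    simp only [Matrix.transpose_apply]
    rw [this]
    simp [Matrix.one_apply, Pi.single_apply, eq_comm]
  have : g = φ ⟨_, hgS⟩ := Subtype.ext (Units.ext rfl)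
  rw [this]
  exact hC _ ⟨_, rfl⟩

lemma bounded_fibre (hn : 2 ≤ n) (ρ : LorentzGrp n →* (V →L[ℝ] V))
    (hρ : Continuous fun g => ρ g) (z : Fin (n + 1) → ℝ) :
    ∃ C, ∀ g : LorentzGrp n, lorAct g (basePt n) = z → ‖ρ g‖ ≤ C := by
  obtain ⟨C, hC⟩ := bounded_stab hn ρ hρ
  by_cases hne : ∃ g0 : LorentzGrp n, lorAct g0 (basePt n) = z
  · obtain ⟨g0, hg0⟩ := hne
    refine ⟨‖ρ g0‖ * C, fun g hg => ?_⟩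
    have : ρ g = ρ g0 * ρ (g0⁻¹ * g) := by rw [← map_mul, mul_inv_cancel_left]
    rw [this]
    refine (norm_mul_le _ _).trans ?_
    gcongr
    apply hC
    rw [lorAct_mul, hg, ← hg0, lorAct_inv_act]
  · exact ⟨0, fun g hg => absurd ⟨g, hg⟩ hne⟩

lemma lorB_basePt_self (hn : 2 ≤ n) : lorB n (basePt n) (basePt n) = -2 := by
  have h0 : Fin.last n ≠ 0 := by
    intro h; have := congrArg Fin.val h; simp at this; omega
  rw [lorB_basePt _ hn]
  simp [basePt, h0]; norm_num

/-- The dynamics at one limit direction. -/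
lemma limit_dynamics (hn : 2 ≤ n) (ρ : LorentzGrp n →* (V →L[ℝ] V))
    (hρ : Continuous fun g => ρ g) (G : Set (LorentzGrp n)) (v : V) (hv : IsStableVec ρ G v)
    (p r : Fin (n + 1) → ℝ) (h : NP p r) (hp : IsLimitDirection n G p) :
    ∃ (s : ℕ → ℝ) (x : ℕ → V) (C : ℝ), (∀ᶠ k in atTop, 0 < s k) ∧ Tendsto s atTop (𝓝 0) ∧
      Tendsto x atTop (𝓝 v) ∧ ∀ᶠ k in atTop, ‖boostFam ρ p r h (s k) (x k)‖ ≤ C := by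
  obtain ⟨-, -, g, lam, hg, hlim⟩ := hp
  obtain ⟨R, hR⟩ := hv.exists_norm_le
  obtain ⟨C1, hC1⟩ := bounded_fibre hn ρ hρ (p - r)
  obtain ⟨C2, hC2⟩ := bounded_fibre hn ρ hρ (-(p - r))
  set o : ℕ → Fin (n + 1) → ℝ := fun k => lorAct (g k)⁻¹ (basePt n) with ho
  have hqo : ∀ k, lorB n (o k) (o k) = -2 := fun k => by
    rw [ho]; simp only; rw [lorB_act, lorB_basePt_self hn]
  set α : ℕ → ℝ := fun k => lorB n (o k) r with hα
  set β : ℕ → ℝ := fun k => lorB n (o k) p with hβ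
  have hlα : Tendsto (fun k => lam k * α k) atTop (𝓝 1) := by
    have := tendsto_lorB hlim (tendsto_const_nhds (x := r))
    simpa only [lorB_smul_left, h.hpr] using this
  have hlβ : Tendsto (fun k => lam k * β k) atTop (𝓝 0) := by
    have := tendsto_lorB hlim (tendsto_const_nhds (x := p))
    simpa only [lorB_smul_left, h.hp] using this
  have hlam : Tendsto lam atTop (𝓝 0) := by
    have h1 := tendsto_lorB hlim hlim
    simp only [lorB_smul_left, lorB_smul_right, h.hp] at h1
    have h2 : Tendsto (fun k => (lam k) ^ 2) atTop (𝓝 0) := by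
      have := h1.mul_const (-1/2)
      rw [zero_mul] at this
      refine this.congr fun k => ?_
      have := hqo k
      simp only [ho] at this
      rw [this]; ring
    have h3 := (Real.continuous_sqrt.tendsto 0).comp h2
    simp only [Function.comp_def, Real.sqrt_sq_eq_abs, Real.sqrt_zero] at h3
    exact (tendsto_zero_iff_abs_tendsto_zero _).mpr h3
  have hne : ∀ᶠ k in atTop, lam k * α k ≠ 0 := hlα.eventually_ne one_ne_zero
  have hαinv : Tendsto (fun k => (α k)⁻¹) atTop (𝓝 0) := by
    have : Tendsto (fun k => lam k / (lam k * α k)) atTop (𝓝 (0 / 1)) :=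
      hlam.div hlα one_ne_zero
    rw [zero_div] at this
    refine this.congr' ?_
    filter_upwards [hne] with k hk
    have h1 := left_ne_zero_of_mul hk
    have h2 := right_ne_zero_of_mul hk
    field_simp
  let x : ℕ → {x // lorB n r x = 0} := fun k =>
    ⟨-((α k)⁻¹ • (o k - α k • p - β k • r)), by
      have e1 : lorB n r (o k) = α k := lorB_comm _ _
      simp only [lorB_neg_right, lorB_smul_right, lorB_sub_right, e1, h.symm.hpr, h.hr]
      ring⟩
  have hxlim : Tendsto x atTop (𝓝 ⟨0, lorB_zero_right _⟩) := by
    rw [tendsto_subtype_rng]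
    have h1 : Tendsto (fun k => -((lam k * α k)⁻¹ • (lam k • o k)) + p
        + ((lam k * β k) * (lam k * α k)⁻¹) • r) atTop
        (𝓝 (-((1:ℝ)⁻¹ • p) + p + ((0:ℝ) * (1:ℝ)⁻¹) • r)) := by
      have hi := hlα.inv₀ one_ne_zero
      exact (((hi.smul hlim).neg).add_const p).add ((hlβ.mul hi).smul_const r)
    have e : (-((1:ℝ)⁻¹ • p) + p + ((0:ℝ) * (1:ℝ)⁻¹) • r) = 0 := by
      simp
    rw [e] at h1
    refine h1.congr' ?_
    filter_upwards [hne] with k hk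
    have h1 := left_ne_zero_of_mul hk
    have h2 := right_ne_zero_of_mul hk
    simp only [x]
    match_scalars <;> field_simp
  refine ⟨fun k => Real.sqrt |(α k)⁻¹|, fun k => ρ (eich r h.hr (x k)) v, max C1 C2 * R, ?_, ?_, ?_, ?_⟩
  · filter_upwards [hne] with k hk
    have h2 := right_ne_zero_of_mul hk
    positivity
  · have := (Real.continuous_sqrt.tendsto 0).comp ((tendsto_zero_iff_abs_tendsto_zero _).mp hαinv)
    rw [Real.sqrt_zero] at this
    exact this
  · have h1 : Tendsto (fun k => ρ (eich r h.hr (x k))) atTop (𝓝 (ρ 1)) := by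
      have := ((hρ.comp (continuous_eich r h.hr)).tendsto _).comp hxlim
      simpa only [Function.comp_def, eich_zero r h.hr ⟨0, lorB_zero_right _⟩ rfl] using this
    have h2 := ((ContinuousLinearMap.apply ℝ V v).continuous.tendsto _).comp h1
    simpa [Function.comp_def] using h2
  · filter_upwards [hne] with k hk
    have h2 := right_ne_zero_of_mul hk
    have hpos : 0 < |(α k)⁻¹| := by positivity
    rw [boostFam_pos _ _ _ _ _ (Real.sqrt_pos.mpr hpos)]
    set b : LorentzGrp n := boost p r h ⟨√|(α k)⁻¹| ^ 2, pow_pos (Real.sqrt_pos.mpr hpos) 2⟩ with hb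
    set m := eich r h.hr (x k) with hm
    have hc : ρ b (ρ m v) = ρ (b * m * (g k)⁻¹) (ρ (g k) v) := by
      simp [map_mul, ← mul_apply_eq_comp, mul_assoc, ← map_mul]
    rw [hc]
    have hmo : lorAct m (o k) = α k • p - (α k)⁻¹ • r := by
      have e1 := hqo k
      have e2 : lorB n p (o k) = β k := lorB_comm _ _
      have e3 : lorB n r (o k) = α k := lorB_comm _ _
      have e4 : lorB n (o k) p = β k := rfl
      have e5 : lorB n (o k) r = α k := rfl
      rw [hm, eich_act]
      simp only [x, lorB_neg_left, lorB_neg_right, lorB_smul_left, lorB_smul_right, lorB_sub_left,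
        lorB_sub_right, e1, e2, e3, e4, e5, h.hp, h.hr, h.hpr, h.symm.hpr]
      match_scalars <;> field_simp <;> ring
    have hbo : lorAct (b * m * (g k)⁻¹) (basePt n) = p - r ∨
        lorAct (b * m * (g k)⁻¹) (basePt n) = -(p - r) := by
      rw [lorAct_mul, lorAct_mul]
      change lorAct b (lorAct m (o k)) = _ ∨ lorAct b (lorAct m (o k)) = _
      rw [hmo, lorAct_sub, lorAct_smul, lorAct_smul, hb, boost_p, boost_r]
      simp only [Real.sq_sqrt hpos.le]
      rcases lt_or_gt_of_ne h2 with hneg | hpos'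
      · right
        rw [abs_of_neg (inv_lt_zero.mpr hneg)]
        match_scalars <;> field_simp
      · left
        rw [abs_of_pos (inv_pos.mpr hpos')]
        match_scalars <;> field_simp
    have hn1 : ‖ρ (b * m * (g k)⁻¹)‖ ≤ max C1 C2 := by
      rcases hbo with hbo | hbo
      · exact (hC1 _ hbo).trans (le_max_left _ _)
      · exact (hC2 _ hbo).trans (le_max_right _ _)
    have hn2 : ‖ρ (g k) v‖ ≤ R := hR _ ⟨g k, hg k, rfl⟩
    refine (ContinuousLinearMap.le_opNorm _ _).trans ?_
    have : 0 ≤ max C1 C2 := (norm_nonneg _).trans hn1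
    gcongr

lemma boost_fixes [FiniteDimensional ℝ V] (hn : 2 ≤ n) (ρ : LorentzGrp n →* (V →L[ℝ] V))
    (hρ : Continuous fun g => ρ g) (G : Set (LorentzGrp n)) (v : V) (hv : IsStableVec ρ G v)
    (p r w : Fin (n + 1) → ℝ) (h : NP p r) (hp : IsLimitDirection n G p)
    (hr : IsLimitDirection n G r) (hpw : lorB n p w = 0) (hrw : lorB n r w = 0)
    (hw : lorB n w w = 1) (c : {c : ℝ // 0 < c}) : ρ (boost p r h c) v = v := by
  obtain ⟨e, m, Q, hQ⟩ := boost_laurent ρ hρ p r w h hpw hrw hw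
  obtain ⟨s, x, C, hs, hs0, hx, hC⟩ := limit_dynamics hn ρ hρ G v hv p r h hp
  obtain ⟨s', x', C', hs', hs0', hx', hC'⟩ := limit_dynamics hn ρ hρ G v hv r p h.symm hr
  have key := fixed_of_bounded (boostFam ρ p r h) m e Q hQ ?_ ?_ v s x hs hs0 hx C hC
    s' x' hs' hs0' hx' C' ?_ (Real.sqrt c) (Real.sqrt_pos.mpr c.2)
  · rw [boostFam_pos _ _ _ _ _ (Real.sqrt_pos.mpr c.2)] at key
    convert key
    exact (Real.sq_sqrt c.2.le).symm
  · intro s t hs ht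
    rw [boostFam_pos _ _ _ _ _ hs, boostFam_pos _ _ _ _ _ ht, boostFam_pos _ _ _ _ _ (mul_pos hs ht),
      ← map_mul, boost_mul]
    congr 2
    exact Subtype.ext (mul_pow s t 2)
  · rw [boostFam_pos _ _ _ _ _ one_pos, ← map_one ρ, ← boost_one p r h]
    congr 2
    exact Subtype.ext (one_pow 2)
  · filter_upwards [hs', hC'] with k hk hCk
    rw [boostFam_pos _ _ _ _ _ hk, boost_swap] at hCk
    rw [boostFam_pos _ _ _ _ _ (inv_pos.mpr hk)]
    simpa only [inv_pow] using hCk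

end Rep

section Final
variable {n : ℕ}

lemma eq_zero_of_perp_basePt (hn : 2 ≤ n) (y : Fin (n + 1) → ℝ) (hy : lorB n (basePt n) y = 0)
    (hq : lorB n y y ≤ 0) : y = 0 := by
  have h := lorB_euclid y y hn
  rw [hy, mul_zero, add_zero] at h
  have h2 : 0 ≤ y ⬝ᵥ y := Finset.sum_nonneg fun i _ => mul_self_nonneg _
  exact dotProduct_self_eq_zero.mp (le_antisymm (h ▸ hq) h2)

lemma basePt_ne (hn : 2 ≤ n) (p : Fin (n + 1) → ℝ) (hp : lorB n p p = 0) (h0 : p ≠ 0) :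
    lorB n (basePt n) p ≠ 0 := fun h => h0 (eq_zero_of_perp_basePt hn p h hp.le)

lemma null_pair_ne (hn : 2 ≤ n) (p p' : Fin (n + 1) → ℝ) (hp : lorB n p p = 0)
    (hp' : lorB n p' p' = 0) (h0 : p ≠ 0) (h1 : ∀ c : ℝ, p' ≠ c • p) : lorB n p p' ≠ 0 := by
  intro h
  have ha := basePt_ne hn p hp h0
  have h' : lorB n p' p = 0 := by rw [lorB_comm, h]
  have hz : lorB n (basePt n) p • p' - lorB n (basePt n) p' • p = 0 := by
    apply eq_zero_of_perp_basePt hn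
    · rw [lorB_sub_right, lorB_smul_right, lorB_smul_right]; ring
    · simp only [lorB_sub_right, lorB_smul_right, lorB_sub_left, lorB_smul_left, h, h', hp, hp']
      simp
  apply h1 ((lorB n (basePt n) p)⁻¹ * lorB n (basePt n) p')
  rw [mul_smul, ← sub_eq_zero.mp hz, smul_smul, inv_mul_cancel₀ ha, one_smul]

lemma perp_pos (hn : 2 ≤ n) (p r w : Fin (n + 1) → ℝ) (h : NP p r) (hpw : lorB n p w = 0)
    (hrw : lorB n r w = 0) (hw : lorB n w w ≠ 0) : 0 < lorB n w w := by
  by_contra hcon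
  push Not at hcon
  have hp0 : p ≠ 0 := by
    rintro rfl
    have := h.hpr
    rw [lorB_zero_left] at this
    exact zero_ne_one this
  have ha := basePt_ne hn p h.hp hp0
  have h' : lorB n w p = 0 := by rw [lorB_comm, hpw]
  have hz : lorB n (basePt n) p • w - lorB n (basePt n) w • p = 0 := by
    apply eq_zero_of_perp_basePt hn
    · rw [lorB_sub_right, lorB_smul_right, lorB_smul_right]; ring
    · simp only [lorB_sub_right, lorB_smul_right, lorB_sub_left, lorB_smul_left, hpw, h', h.hp]
      have := mul_nonneg (mul_self_nonneg (lorB n (basePt n) p)) (neg_nonneg.mpr hcon)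
      nlinarith
  have e := sub_eq_zero.mp hz
  have e2 := congrArg (fun y => lorB n y w) e
  simp only [lorB_smul_left, hpw, mul_zero] at e2
  exact (mul_ne_zero ha hw) e2

lemma exists_w (hn : 2 ≤ n) (p r u : Fin (n + 1) → ℝ) (h : NP p r) (hu : lorB n u u = 0)
    (hup : lorB n u p ≠ 0) (hur : lorB n u r ≠ 0) :
    ∃ (w : Fin (n + 1) → ℝ) (σ : ℝ), σ ≠ 0 ∧ lorB n p w = 0 ∧ lorB n r w = 0 ∧ lorB n w w = 1 ∧
      u = lorB n u r • p + lorB n u p • r + σ • w := by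
  have e1 := lorB_comm p u
  have e2 := lorB_comm r u
  set w0 := u - lorB n u r • p - lorB n u p • r with hw0
  have hpw : lorB n p w0 = 0 := by
    simp only [hw0, lorB_sub_right, lorB_smul_right, h.hp, h.hpr, e1]; ring
  have hrw : lorB n r w0 = 0 := by
    simp only [hw0, lorB_sub_right, lorB_smul_right, h.hr, h.symm.hpr, e2]; ring
  have hww : lorB n w0 w0 = - (2 * lorB n u r * lorB n u p) := by
    simp only [hw0, lorB_sub_right, lorB_smul_right, lorB_sub_left, lorB_smul_left, h.hr, h.hp,
      h.hpr, h.symm.hpr, e2, e1, hu]; ring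
  have hpos : 0 < lorB n w0 w0 := perp_pos hn p r w0 h hpw hrw (by
    rw [hww]; exact neg_ne_zero.mpr (mul_ne_zero (mul_ne_zero two_ne_zero hur) hup))
  have hs := Real.sqrt_pos.mpr hpos
  refine ⟨(√(lorB n w0 w0))⁻¹ • w0, √(lorB n w0 w0), hs.ne', ?_, ?_, ?_, ?_⟩
  · rw [lorB_smul_right, hpw, mul_zero]
  · rw [lorB_smul_right, hrw, mul_zero]
  · rw [lorB_smul_right, lorB_smul_left]
    have := Real.mul_self_sqrt hpos.le
    nth_rewrite 3 [← this]
    field_simp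
  · rw [smul_smul, mul_inv_cancel₀ hs.ne', one_smul, hw0]; module

lemma limitDir_smul {G : Set (LorentzGrp n)} {p : Fin (n + 1) → ℝ} (hp : IsLimitDirection n G p)
    (c : ℝ) (hc : c ≠ 0) : IsLimitDirection n G (c • p) := by
  obtain ⟨h0, hq, g, lam, hg, hlim⟩ := hp
  refine ⟨smul_ne_zero hc h0, ?_, g, fun k => c * lam k, hg, ?_⟩
  · rw [lorQ_eq] at *
    rw [lorB_smul_left, lorB_smul_right, hq]; ring
  · simpa only [mul_smul] using hlim.const_smul c

variable {V : Type*} [NormedAddCommGroup V] [NormedSpace ℝ V]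

lemma fix_inv (ρ : LorentzGrp n →* (V →L[ℝ] V)) (v : V) {g : LorentzGrp n} (hg : ρ g v = v) :
    ρ g⁻¹ v = v := by
  conv_lhs => rw [← hg]
  rw [← mul_apply_eq_comp, ← map_mul, inv_mul_cancel, map_one]; rfl

lemma fix_mul (ρ : LorentzGrp n →* (V →L[ℝ] V)) (v : V) {g h : LorentzGrp n} (hg : ρ g v = v)
    (hh : ρ h v = v) : ρ (g * h) v = v := by
  rw [map_mul, mul_apply_eq_comp, hh, hg]

/-- Boosts along two pairs sharing `p` generate the unipotent family of `p`. -/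
lemma fix_eich (ρ : LorentzGrp n →* (V →L[ℝ] V)) (v : V)
    (p r w u r2 : Fin (n + 1) → ℝ) (h : NP p r) (h2 : NP p r2) (σ : ℝ) (hσ : σ ≠ 0)
    (hpw : lorB n p w = 0) (hrw : lorB n r w = 0) (hw : lorB n w w = 1)
    (hu0 : lorB n u u = 0) (hup : lorB n u p ≠ 0)
    (hu : u = lorB n u r • p + lorB n u p • r + σ • w) (hr2 : r2 = (lorB n u p)⁻¹ • u)
    (hf : ∀ c, ρ (boost p r h c) v = v) (hf2 : ∀ c, ρ (boost p r2 h2 c) v = v)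
    (y : {x // lorB n p x = 0}) (t : ℝ) (hy : (y : Fin (n + 1) → ℝ) = t • w) :
    ρ (eich p h.hp y) v = v := by
  set a := lorB n u p with ha
  set b := lorB n u r with hb
  have hq : 2 * a * b + σ ^ 2 = 0 := by
    have e1 : lorB n w p = 0 := by rw [lorB_comm, hpw]
    have e2 : lorB n w r = 0 := by rw [lorB_comm, hrw]
    have := hu0
    rw [hu] at this
    simp only [lorB_add_left, lorB_add_right, lorB_smul_left, lorB_smul_right, h.hp, h.hr, h.hpr,
      h.symm.hpr, hpw, hrw, hw, e1, e2] at this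
    linarith
  have hperp : ∀ s : ℝ, lorB n p (s • w) = 0 := fun s => by rw [lorB_smul_right, hpw, mul_zero]
  let U : ℝ → LorentzGrp n := fun s => eich p h.hp ⟨s • w, hperp s⟩
  set σ' := σ / a with hσ'
  have hσ0 : σ' ≠ 0 := div_ne_zero hσ hup
  have hU : lorAct (U σ') r = r2 := by
    simp only [U, eich_act, lorB_smul_left, lorB_smul_right, h.symm.hpr, hrw, hw]
    rw [hr2, hu]
    have hb' : b = - σ ^ 2 / (2 * a) := by field_simp; linarith
    rw [hb', hσ']
    match_scalars <;> field_simp <;> ring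
  have hUp : lorAct (U σ') p = p := by
    simp only [U, eich_act, lorB_smul_left, lorB_smul_right, h.hp, hpw, hw]
    module
  have hconj : ∀ c, U σ' * boost p r h c * (U σ')⁻¹ = boost p r2 h2 c :=
    fun c => boost_conj p r p r2 h h2 _ hUp hU c
  have hstep : ∀ c : {c : ℝ // 0 < c}, ρ (U (((c : ℝ) - 1) * σ')) v = v := by
    intro c
    have e1 : boost p r h c * U σ' * (boost p r h c)⁻¹ = U ((c : ℝ) * σ') := by
      refine eich_conj p h.hp _ _ _ c (boost_p p r h c) ?_ (mul_smul _ _ _)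
      apply boost_perp
      · rw [lorB_smul_left, lorB_comm, hpw, mul_zero]
      · rw [lorB_smul_left, lorB_comm, hrw, mul_zero]
    have e2 : U ((c : ℝ) * σ') = U (((c : ℝ) - 1) * σ') * U σ' := by
      symm
      apply eich_mul
      simp only
      module
    have e3 : U (((c : ℝ) - 1) * σ') = boost p r h c * (boost p r2 h2 c)⁻¹ := by
      rw [← hconj c, eq_mul_inv_of_mul_eq (e2.symm.trans e1.symm)]
      group
    rw [e3]
    exact fix_mul ρ v (hf c) (fix_inv ρ v (hf2 c))
  have hUt : ∀ s : ℝ, -1 < s / σ' → ρ (U s) v = v := by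
    intro s hs
    have := hstep ⟨s / σ' + 1, by linarith⟩
    simpa [hσ0] using this
  have hy' : eich p h.hp y = U t := by
    simp only [U]; congr 1; exact Subtype.ext hy
  rw [hy']
  by_cases hc : -1 < t / σ'
  · exact hUt t hc
  · have h1 := hUt (-t) (by rw [neg_div]; linarith)
    have h3 : (U (-t))⁻¹ = U t := eich_inv p h.hp _ _ (by simp)
    rw [← h3]
    exact fix_inv ρ v h1

/-- Big cell: elements near the identity of `SO(E)` are products of unipotents and boosts. -/
lemma big_cell (ρ : LorentzGrp n →* (V →L[ℝ] V)) (v : V)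
    (p r w : Fin (n + 1) → ℝ) (h : NP p r)
    (hpw : lorB n p w = 0) (hrw : lorB n r w = 0) (hw : lorB n w w = 1)
    (hf : ∀ c, ρ (boost p r h c) v = v)
    (hfp : ∀ (y : {x // lorB n p x = 0}) (t : ℝ), (y : Fin (n + 1) → ℝ) = t • w →
      ρ (eich p h.hp y) v = v)
    (hfr : ∀ (y : {x // lorB n r x = 0}) (t : ℝ), (y : Fin (n + 1) → ℝ) = t • w →
      ρ (eich r h.hr y) v = v)
    (E : Submodule ℝ (Fin (n + 1) → ℝ)) (hpE : p ∈ E) (hrE : r ∈ E) (hwE : w ∈ E)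
    (hE : ∀ y ∈ E, y = lorB n y r • p + lorB n y p • r + lorB n y w • w)
    (g : LorentzGrp n) (hgE : ∀ y ∈ E, lorAct g y ∈ E)
    (hgp : ∀ x, (∀ e ∈ E, lorB n x e = 0) → lorAct g x = x)
    (ha : 0 < lorB n (lorAct g p) r)
    (hb : 0 < lorB n (lorAct g p) r * lorB n (lorAct g w) w
      - lorB n (lorAct g p) w * lorB n (lorAct g w) r) : ρ g v = v := by
  have e1 : lorB n w p = 0 := by rw [lorB_comm, hpw]
  have e2 : lorB n w r = 0 := by rw [lorB_comm, hrw]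
  have hps : ∀ s : ℝ, lorB n p (s • w) = 0 := fun s => by rw [lorB_smul_right, hpw, mul_zero]
  have hrs : ∀ s : ℝ, lorB n r (s • w) = 0 := fun s => by rw [lorB_smul_right, hrw, mul_zero]
  let U : ℝ → LorentzGrp n := fun s => eich p h.hp ⟨s • w, hps s⟩
  let L : ℝ → LorentzGrp n := fun s => eich r h.hr ⟨s • w, hrs s⟩
  have hUf : ∀ s, ρ (U s) v = v := fun s => hfp _ s rfl
  have hLf : ∀ s, ρ (L s) v = v := fun s => hfr _ s rfl
  have hUact : ∀ s y, lorAct (U s) y = y + (lorB n y p * s) • w - (s * lorB n y w) • p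
      - (s ^ 2 / 2 * lorB n y p) • p := by
    intro s y
    simp only [U, eich_act, lorB_smul_left, lorB_smul_right, hw]; module
  have hLact : ∀ s y, lorAct (L s) y = y + (lorB n y r * s) • w - (s * lorB n y w) • r
      - (s ^ 2 / 2 * lorB n y r) • r := by
    intro s y
    simp only [L, eich_act, lorB_smul_left, lorB_smul_right, hw]; module
  set α := lorB n (lorAct g p) r with hα
  set γ := lorB n (lorAct g p) w with hγ
  set x := γ / α with hx
  set A := boost p r h ⟨α, ha⟩ with hA
  have hgpE := hE _ (hgE p hpE)
  have hnull : lorB n (lorAct g p) (lorAct g p) = 0 := by rw [lorB_act, h.hp]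
  have hβ : 2 * α * lorB n (lorAct g p) p + γ ^ 2 = 0 := by
    have := hnull
    rw [hgpE] at this
    simp only [lorB_add_left, lorB_add_right, lorB_smul_left, lorB_smul_right, h.hp, h.hr, h.hpr,
      h.symm.hpr, hpw, hrw, hw, e1, e2] at this
    linarith
  have hβ' : lorB n (lorAct g p) p = - γ ^ 2 / (2 * α) := by field_simp; linarith
  have hLA : lorAct (L x * A) p = lorAct g p := by
    rw [lorAct_mul, hA, boost_p, hLact, hgpE, hβ', ← hα, ← hγ]
    simp only [lorB_smul_left, hpw, h.hpr, hx]
    match_scalars <;> field_simp <;> ring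
  set g1 := (L x * A)⁻¹ * g with hg1
  have hg1p : lorAct g1 p = p := by rw [hg1, lorAct_mul, ← hLA, lorAct_inv_act]
  -- g1 preserves E
  have hUE : ∀ s, ∀ y ∈ E, lorAct (U s) y ∈ E := by
    intro s y hy
    rw [hUact]
    exact E.sub_mem (E.sub_mem (E.add_mem hy (E.smul_mem _ hwE)) (E.smul_mem _ hpE))
      (E.smul_mem _ hpE)
  have hLE : ∀ s, ∀ y ∈ E, lorAct (L s) y ∈ E := by
    intro s y hy
    rw [hLact]
    exact E.sub_mem (E.sub_mem (E.add_mem hy (E.smul_mem _ hwE)) (E.smul_mem _ hrE))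
      (E.smul_mem _ hrE)
  have hAE : ∀ c, ∀ y ∈ E, lorAct (boost p r h c) y ∈ E := by
    intro c y hy
    rw [boost_act]
    exact E.add_mem (E.add_mem hy (E.smul_mem _ hpE)) (E.smul_mem _ hrE)
  have hLinv : ∀ s, (L s)⁻¹ = L (-s) := fun s => eich_inv r h.hr _ _ (by simp)
  have hUinv : ∀ s, (U s)⁻¹ = U (-s) := fun s => eich_inv p h.hp _ _ (by simp)
  have hg1E : ∀ y ∈ E, lorAct g1 y ∈ E := by
    intro y hy
    rw [hg1, _root_.mul_inv_rev, lorAct_mul, lorAct_mul, hA, boost_inv, hLinv]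
    exact hAE _ _ (hLE _ _ (hgE y hy))
  -- second step
  set y := lorB n (lorAct g1 r) w with hy
  have hg1rp : lorB n (lorAct g1 r) p = 1 := by
    conv_lhs => rw [← hg1p]
    rw [lorB_act, h.symm.hpr]
  have hg1rr : lorB n (lorAct g1 r) r = - y ^ 2 / 2 := by
    have hn2 : lorB n (lorAct g1 r) (lorAct g1 r) = 0 := by rw [lorB_act, h.hr]
    rw [hE _ (hg1E r hrE), hg1rp] at hn2
    simp only [lorB_add_left, lorB_add_right, lorB_smul_left, lorB_smul_right, h.hp, h.hr, h.hpr,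
      h.symm.hpr, hpw, hrw, hw, e1, e2] at hn2
    linarith
  have hUr : lorAct (U y) r = lorAct g1 r := by
    rw [hE _ (hg1E r hrE), hg1rp, hg1rr, hUact]
    simp only [h.symm.hpr, hrw]
    match_scalars <;> ring
  set g2 := (U y)⁻¹ * g1 with hg2
  have hUp : lorAct (U y) p = p := by
    rw [hUact]; simp only [h.hp, hpw]; module
  have hg2p : lorAct g2 p = p := by
    rw [hg2, lorAct_mul, hg1p]
    conv_lhs => rw [← hUp]
    rw [lorAct_inv_act]
  have hg2r : lorAct g2 r = r := by rw [hg2, lorAct_mul, ← hUr, lorAct_inv_act]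
  have hg2E : ∀ z ∈ E, lorAct g2 z ∈ E := by
    intro z hz
    rw [hg2, lorAct_mul, hUinv]
    exact hUE _ _ (hg1E z hz)
  have hg2wp : lorB n (lorAct g2 w) p = 0 := by
    conv_lhs => rw [← hg2p]
    rw [lorB_act, e1]
  have hg2wr : lorB n (lorAct g2 w) r = 0 := by
    conv_lhs => rw [← hg2r]
    rw [lorB_act, e2]
  set c := lorB n (lorAct g2 w) w with hc
  have hg2w : lorAct g2 w = c • w := by
    rw [hE _ (hg2E w hwE), hg2wp, hg2wr]
    module
  have hcc : c * c = 1 := by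
    have : lorB n (lorAct g2 w) (lorAct g2 w) = 1 := by rw [lorB_act, hw]
    rw [hg2w, lorB_smul_left, lorB_smul_right, hw] at this
    linarith
  have hcpos : 0 < c := by
    have s1 : c = lorB n (lorAct g1 w) (lorAct (U y) w) := by
      rw [hc, hg2, lorAct_mul, lorB_act_left, inv_inv]
    have s2 : lorAct (U y) w = w - y • p := by
      rw [hUact, e1, hw]; module
    have s3 : lorB n (lorAct g1 w) p = 0 := by
      conv_lhs => rw [← hg1p]
      rw [lorB_act, e1]
    have s4 : lorB n (lorAct g1 w) w = lorB n (lorAct g w) (lorAct (L x * A) w) := by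
      rw [hg1, lorAct_mul, lorB_act_left, inv_inv]
    have s5 : lorAct (L x * A) w = w - x • r := by
      rw [lorAct_mul, hA, boost_perp p r h _ w e1 e2, hLact, e2, hw]; module
    rw [s1, s2, lorB_sub_right, lorB_smul_right, s3, s4, s5, lorB_sub_right, lorB_smul_right, hx]
    have : lorB n (lorAct g w) w - γ / α * lorB n (lorAct g w) r - y * 0
      = (α * lorB n (lorAct g w) w - γ * lorB n (lorAct g w) r) / α := by
      field_simp
      ring
    rw [this]
    exact div_pos hb ha
  have hc1 : c = 1 := by nlinarith
  rw [hc1, one_smul] at hg2w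
  have hg2perp : ∀ z, lorB n z p = 0 → lorB n z r = 0 → lorB n z w = 0 → lorAct g2 z = z := by
    intro z hz1 hz2 hz3
    have hz : lorAct g z = z := by
      apply hgp
      intro e he
      rw [hE e he]
      simp only [lorB_add_right, lorB_smul_right, hz1, hz2, hz3]; ring
    rw [hg2, hg1, lorAct_mul, lorAct_mul, hz, _root_.mul_inv_rev, lorAct_mul, hLinv, hLact, hz2, hz3]
    have : z + (0 * -x) • w - (-x * 0) • r - ((-x) ^ 2 / 2 * 0) • r = z := by module
    rw [this, hA, boost_inv, boost_perp p r h _ z hz1 hz2, hUinv, hUact, hz1, hz3]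
    module
  have hg2one : g2 = 1 := by
    apply lorGrp_ext
    intro z
    rw [lorAct_one]
    set z0 := z - lorB n z r • p - lorB n z p • r - lorB n z w • w with hz0
    have hz : z = lorB n z r • p + lorB n z p • r + lorB n z w • w + z0 := by rw [hz0]; module
    have hfix : lorAct g2 z0 = z0 := by
      apply hg2perp <;>
      · simp only [hz0, lorB_sub_left, lorB_smul_left, h.hp, h.hr, h.hpr, h.symm.hpr, hpw, hrw, hw,
          e1, e2]
        ring
    conv_lhs => rw [hz]
    rw [lorAct_add, lorAct_add, lorAct_add, lorAct_smul, lorAct_smul, lorAct_smul, hg2p, hg2r, hg2w,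
      hfix, ← hz]
  have hgeq : g = L x * A * U y := by
    rw [hg2, inv_mul_eq_one] at hg2one
    rw [hg2one, hg1]
    group
  rw [hgeq]
  exact fix_mul ρ v (fix_mul ρ v (hLf x) (hf _)) (hUf y)

end Final

/-- Let `n ≥ 2` and let `ρ` be a continuous representation of `O(1,n)` on a
finite-dimensional real normed vector space `V`, and `𝒢 ⊆ O(1,n)`. Let `p, p', p''` be three
pairwise non-proportional limit directions of `𝒢` and `E = span{p, p', p''}`. Then every vector
`v` stable under `𝒢` is fixed by `SO°(E)`. -/
theorem stable_vector_fixed_by_SO_of_three_limit_directions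
    (n : ℕ) (hn : 2 ≤ n)
    (V : Type*) [NormedAddCommGroup V] [NormedSpace ℝ V] [FiniteDimensional ℝ V]
    (ρ : LorentzGrp n →* (V →L[ℝ] V)) (hρ : Continuous fun g => ρ g)
    (G : Set (LorentzGrp n))
    (p p' p'' : Fin (n + 1) → ℝ)
    (hp : IsLimitDirection n G p) (hp' : IsLimitDirection n G p')
    (hp'' : IsLimitDirection n G p'')
    (h1 : ∀ c : ℝ, p' ≠ c • p) (h2 : ∀ c : ℝ, p'' ≠ c • p) (h3 : ∀ c : ℝ, p'' ≠ c • p')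
    (E : Submodule ℝ (Fin (n + 1) → ℝ))
    (hE : E = Submodule.span ℝ {p, p', p''})
    (v : V) (hv : IsStableVec ρ G v) :
    ∀ g ∈ SOIdComp n E, ρ g v = v := by
  have q1 : lorB n p p = 0 := by rw [← lorQ_eq]; exact hp.2.1
  have q2 : lorB n p' p' = 0 := by rw [← lorQ_eq]; exact hp'.2.1
  have q3 : lorB n p'' p'' = 0 := by rw [← lorQ_eq]; exact hp''.2.1
  have b1 := null_pair_ne hn p p' q1 q2 hp.1 h1
  have b2 := null_pair_ne hn p p'' q1 q3 hp.1 h2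
  have b3 := null_pair_ne hn p' p'' q2 q3 hp'.1 h3
  have b1' : lorB n p' p ≠ 0 := by rwa [lorB_comm]
  have b2' : lorB n p'' p ≠ 0 := by rwa [lorB_comm]
  have b3' : lorB n p'' p' ≠ 0 := by rwa [lorB_comm]
  obtain ⟨r, hr⟩ : ∃ r, r = (lorB n p p')⁻¹ • p' := ⟨_, rfl⟩
  have hrl : IsLimitDirection n G r := hr ▸ limitDir_smul hp' _ (inv_ne_zero b1)
  have h : NP p r := ⟨q1, by rw [hr, lorB_smul_left, lorB_smul_right, q2]; ring,
    by rw [hr, lorB_smul_right, inv_mul_cancel₀ b1]⟩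
  have hur : lorB n p'' r ≠ 0 := by
    rw [hr, lorB_smul_right]; exact mul_ne_zero (inv_ne_zero b1) b3'
  obtain ⟨r2, hr2⟩ : ∃ r2, r2 = (lorB n p'' p)⁻¹ • p'' := ⟨_, rfl⟩
  have hr2l : IsLimitDirection n G r2 := hr2 ▸ limitDir_smul hp'' _ (inv_ne_zero b2')
  have hn2 : NP p r2 := ⟨q1, by rw [hr2, lorB_smul_left, lorB_smul_right, q3]; ring,
    by rw [hr2, lorB_smul_right, lorB_comm p p'', inv_mul_cancel₀ b2']⟩
  obtain ⟨r3, hr3⟩ : ∃ r3, r3 = (lorB n p'' r)⁻¹ • p'' := ⟨_, rfl⟩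
  have hr3l : IsLimitDirection n G r3 := hr3 ▸ limitDir_smul hp'' _ (inv_ne_zero hur)
  have hn3 : NP r r3 := ⟨h.hr, by rw [hr3, lorB_smul_left, lorB_smul_right, q3]; ring,
    by rw [hr3, lorB_smul_right, lorB_comm r p'', inv_mul_cancel₀ hur]⟩
  obtain ⟨w, σ, hσ, hpw, hrw, hw, hu⟩ := exists_w hn p r p'' h q3 b2' hur
  obtain ⟨w2, -, -, hpw2, hrw2, hw2, -⟩ := exists_w hn p r2 p' hn2 q2 b1' (by
    rw [hr2, lorB_smul_right]; exact mul_ne_zero (inv_ne_zero b2') b3)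
  obtain ⟨w3, -, -, hpw3, hrw3, hw3, -⟩ := exists_w hn r r3 p hn3 q1
    (by rw [h.hpr]; exact one_ne_zero)
    (by rw [hr3, lorB_smul_right]; exact mul_ne_zero (inv_ne_zero hur) b2)
  have f1 := boost_fixes hn ρ hρ G v hv p r w h hp hrl hpw hrw hw
  have f1' := boost_fixes hn ρ hρ G v hv r p w h.symm hrl hp hrw hpw hw
  have f2 := boost_fixes hn ρ hρ G v hv p r2 w2 hn2 hp hr2l hpw2 hrw2 hw2
  have f3 := boost_fixes hn ρ hρ G v hv r r3 w3 hn3 hrl hr3l hpw3 hrw3 hw3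
  have fU := fix_eich ρ v p r w p'' r2 h hn2 σ hσ hpw hrw hw q3 b2' hu hr2 f1 f2
  have fL := fix_eich ρ v r p w p'' r3 h.symm hn3 σ hσ hrw hpw hw q3 hur
    (hu.trans (by module)) hr3 f1' f3
  have hpE : p ∈ E := by rw [hE]; exact Submodule.subset_span (by simp)
  have hp'E : p' ∈ E := by rw [hE]; exact Submodule.subset_span (by simp)
  have hp''E : p'' ∈ E := by rw [hE]; exact Submodule.subset_span (by simp)
  have hrE : r ∈ E := by rw [hr]; exact E.smul_mem _ hp'E
  have hwE : w ∈ E := by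
    have : w = σ⁻¹ • (p'' - lorB n p'' r • p - lorB n p'' p • r) := by
      have e : p'' - lorB n p'' r • p - lorB n p'' p • r = σ • w := by
        nth_rewrite 1 [hu]; module
      rw [e, smul_smul, inv_mul_cancel₀ hσ, one_smul]
    rw [this]
    exact E.smul_mem _ (E.sub_mem (E.sub_mem hp''E (E.smul_mem _ hpE)) (E.smul_mem _ hrE))
  have e1 : lorB n w p = 0 := by rw [lorB_comm, hpw]
  have e2 : lorB n w r = 0 := by rw [lorB_comm, hrw]
  have hEy : ∀ y ∈ E, y = lorB n y r • p + lorB n y p • r + lorB n y w • w := by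
    have hle : E ≤ Submodule.span ℝ {p, r, w} := by
      rw [hE, Submodule.span_le]
      have m1 : p ∈ Submodule.span ℝ {p, r, w} := Submodule.subset_span (by simp)
      have m2 : r ∈ Submodule.span ℝ {p, r, w} := Submodule.subset_span (by simp)
      have m3 : w ∈ Submodule.span ℝ {p, r, w} := Submodule.subset_span (by simp)
      rintro y (rfl | rfl | rfl)
      · exact m1
      · have : y = lorB n p y • r := by rw [hr, smul_smul, mul_inv_cancel₀ b1, one_smul]
        rw [this]; exact Submodule.smul_mem _ _ m2
      · rw [hu]
        exact Submodule.add_mem _ (Submodule.add_mem _ (Submodule.smul_mem _ _ m1)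
          (Submodule.smul_mem _ _ m2)) (Submodule.smul_mem _ _ m3)
    intro y hy
    obtain ⟨a, b, c, rfl⟩ := Submodule.mem_span_triple.mp (hle hy)
    simp only [lorB_add_left, lorB_smul_left, h.hp, h.hr, h.hpr, h.symm.hpr, hpw, hrw, hw, e1, e2]
    module
  -- the ambient subgroup
  set S : Set (LorentzGrp n) := {g : LorentzGrp n |
      E.map ((g : GL (Fin (n + 1)) ℝ) : Matrix (Fin (n + 1)) (Fin (n + 1)) ℝ).mulVecLin = E ∧
      ∀ x : Fin (n + 1) → ℝ, (∀ e ∈ E, lorB n x e = 0) → lorAct g x = x} with hS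
  have hSE : ∀ g ∈ S, ∀ y ∈ E, lorAct g y ∈ E := by
    intro g hg y hy
    have : lorAct g y ∈ E.map ((g : GL (Fin (n + 1)) ℝ) :
        Matrix (Fin (n + 1)) (Fin (n + 1)) ℝ).mulVecLin := ⟨y, hy, rfl⟩
    rwa [hg.1] at this
  have hSEi : ∀ g ∈ S, ∀ y ∈ E, lorAct g⁻¹ y ∈ E := by
    intro g hg y hy
    rw [← hg.1] at hy
    obtain ⟨z, hz, rfl⟩ := hy
    have : lorAct g⁻¹ (lorAct g z) = z := lorAct_inv_act g z
    change lorAct g⁻¹ (lorAct g z) ∈ E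
    rwa [this]
  have hopen : ∀ k ∈ S, ∀ᶠ g in 𝓝 k, g ∈ S → ρ g v = ρ k v := by
    intro k hk
    let F1 : LorentzGrp n → ℝ := fun g => lorB n (lorAct (k⁻¹ * g) p) r
    let F2 : LorentzGrp n → ℝ := fun g =>
      lorB n (lorAct (k⁻¹ * g) p) r * lorB n (lorAct (k⁻¹ * g) w) w
      - lorB n (lorAct (k⁻¹ * g) p) w * lorB n (lorAct (k⁻¹ * g) w) r
    have hc : ∀ x y, Continuous fun g : LorentzGrp n => lorB n (lorAct (k⁻¹ * g) x) y :=
      fun x y => lorB_cont ((continuous_lorAct x).comp (continuous_const.mul continuous_id))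
        continuous_const
    have hF1 : Continuous F1 := hc p r
    have hF2 : Continuous F2 := ((hc p r).mul (hc w w)).sub ((hc p w).mul (hc w r))
    have p1 : 0 < F1 k := by simp [F1, lorAct_one, h.hpr]
    have p2 : 0 < F2 k := by simp [F2, lorAct_one, h.hpr, hw, hpw]
    filter_upwards [hF1.continuousAt.eventually_const_lt p1, hF2.continuousAt.eventually_const_lt p2]
      with g hg1 hg2 hgS
    have key : ρ (k⁻¹ * g) v = v := by
      refine big_cell ρ v p r w h hpw hrw hw f1 fU fL E hpE hrE hwE hEy (k⁻¹ * g) ?_ ?_ hg1 hg2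
      · intro y hy
        rw [lorAct_mul]
        exact hSEi k hk _ (hSE g hgS y hy)
      · intro x hx
        rw [lorAct_mul, hgS.2 x hx]
        conv_lhs => rw [← hk.2 x hx]
        exact lorAct_inv_act k x
    have e : ρ g = ρ k * ρ (k⁻¹ * g) := by rw [← map_mul, mul_inv_cancel_left]
    rw [e, mul_apply_eq_comp, key]
  intro g hg
  change g ∈ connectedComponentIn S 1 at hg
  have h1S : (1 : LorentzGrp n) ∈ S := by
    by_contra hcon
    rw [connectedComponentIn_eq_empty hcon] at hg
    exact hg
  have hpc : IsPreconnected (connectedComponentIn S 1) := isPreconnected_connectedComponentIn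
  have h1C := mem_connectedComponentIn h1S
  have hsub : connectedComponentIn S 1 ⊆ S := connectedComponentIn_subset S 1
  have : PreconnectedSpace (connectedComponentIn S 1) := isPreconnected_iff_preconnectedSpace.mp hpc
  have hlc : IsLocallyConstant fun k : connectedComponentIn S 1 => ρ k.1 v := by
    rw [IsLocallyConstant.iff_eventually_eq]
    intro k
    have := (continuous_subtype_val.tendsto k).eventually (hopen k.1 (hsub k.2))
    filter_upwards [this] with y hy
    exact hy (hsub y.2)
  have := hlc.apply_eq_of_preconnectedSpace ⟨g, hg⟩ ⟨1, h1C⟩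
  simpa using this
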